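/- arXiv:1401.0500 — 4 statements merged into one kernel-verified Lean document; each statement's English description precedes it below -/
import Mathlib

section
/- There exists a finite matroid M such that M satisfies the n-th Kinser inequality for every integer n ≥ 4 and every family of n subsets of its ground set, but M is not representable over any field. Consequently, the class of representable matroids is properly contained in K_∞ = ⋂_{n≥4} K_n. -/
open Finset

universe u v

namespace Matroid

variable {α : Type*}

/-- The rank of a set in a matroid: the cardinality of a largest independent subset. -/
noncomputable def rnk (M : Matroid α) (X : Set α) : ℕ :=
  sSup {n : ℕ | ∃ I, M.Indep I ∧ I ⊆ X ∧ I.ncard = n}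

/-- The `n`-th Kinser inequality for the family `X 1, …, X n`. -/
def KinserIneq (M : Matroid α) (n : ℕ) (X : ℕ → Set α) : Prop :=
  (∑ i ∈ Finset.Icc 3 n, M.rnk (X i)) + M.rnk (X 1 ∪ X 2) + M.rnk (X 1 ∪ X 3 ∪ X n)
      + ∑ i ∈ Finset.Icc 4 n, M.rnk (X 2 ∪ X (i - 1) ∪ X i)
    ≤ M.rnk (X 1 ∪ X 3) + M.rnk (X 1 ∪ X n)
      + (∑ i ∈ Finset.Icc 3 n, M.rnk (X 2 ∪ X i))
      + ∑ i ∈ Finset.Icc 4 n, M.rnk (X (i - 1) ∪ X i)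

/-- `M` lies in the Kinser class `K n`: the `n`-th Kinser inequality holds for every
family of `n` subsets of the ground set. -/
def MemKinserClass (M : Matroid α) (n : ℕ) : Prop :=
  ∀ X : ℕ → Set α, (∀ i ∈ Finset.Icc 1 n, X i ⊆ M.E) → M.KinserIneq n X

/-- `M` is (isomorphic to) the matroid of linear dependence of a family of vectors of a
vector space over `𝔽`. -/
def IsRepOver {α : Type u} (M : Matroid α) (𝔽 : Type v) [Field 𝔽] : Prop :=
  ∃ (W : Type (max u v)) (_ : AddCommGroup W) (_ : Module 𝔽 W) (φ : α → W),
    ∀ I : Set α, M.Indep I ↔ I ⊆ M.E ∧ LinearIndependent 𝔽 (fun x : I => φ x.1)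

/-- Deletion of a set of elements from a matroid. -/
def del (M : Matroid α) (D : Set α) : Matroid α := M ↾ (M.E \ D)

/-- Contraction of a set of elements in a matroid. -/
def con (M : Matroid α) (C : Set α) : Matroid α := (M✶ ↾ (M✶.E \ C))✶

/-- `N` is a minor of `M`: it is obtained from `M` by contractions and deletions. -/
def IsMinorOf (N M : Matroid α) : Prop :=
  ∃ C D : Set α, C ⊆ M.E ∧ D ⊆ M.E ∧ Disjoint C D ∧ N = (M.con C).del D

/-- `N` is a proper minor of `M`: at least one element is deleted or contracted. -/
def IsProperMinorOf (N M : Matroid α) : Prop :=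
  ∃ C D : Set α, C ⊆ M.E ∧ D ⊆ M.E ∧ Disjoint C D ∧ (C ∪ D).Nonempty ∧
    N = (M.con C).del D

/-- A matroid isomorphism: a bijection of ground sets preserving independence. -/
def IsIsoTo {β : Type*} (M : Matroid α) (N : Matroid β) : Prop :=
  ∃ f : α → β, Set.BijOn f M.E N.E ∧ ∀ I ⊆ M.E, (M.Indep I ↔ N.Indep (f '' I))

/-- The Ingleton inequality (the 4th Kinser inequality) for four subsets. -/
def IngletonIneq (M : Matroid α) (X₁ X₂ X₃ X₄ : Set α) : Prop :=
  M.rnk X₃ + M.rnk X₄ + M.rnk (X₁ ∪ X₂) + M.rnk (X₁ ∪ X₃ ∪ X₄) + M.rnk (X₂ ∪ X₃ ∪ X₄)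
    ≤ M.rnk (X₁ ∪ X₃) + M.rnk (X₁ ∪ X₄) + M.rnk (X₂ ∪ X₃) + M.rnk (X₂ ∪ X₄)
      + M.rnk (X₃ ∪ X₄)

end Matroid

theorem submod_aux {K V : Type*} [Field K] [AddCommGroup V] [Module K V] [FiniteDimensional K V]
    (A B D E : Submodule K V) (hD : D ≤ A ⊔ B) (hA : E ≤ A) (hB : E ≤ B) :
    Module.finrank K D + Module.finrank K E ≤ Module.finrank K A + Module.finrank K B := by
  rw [← Submodule.finrank_sup_add_finrank_inf_eq A B]
  exact add_le_add (Submodule.finrank_mono hD) (Submodule.finrank_mono (le_inf hA hB))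

theorem kinser_sub {K V : Type*} [Field K] [AddCommGroup V] [Module K V] [FiniteDimensional K V]
    (X : ℕ → Submodule K V) (n : ℕ) (hn : 4 ≤ n) :
    (∑ i ∈ Finset.Icc 3 n, Module.finrank K (X i)) + Module.finrank K ↥(X 1 ⊔ X 2)
      + Module.finrank K ↥(X 1 ⊔ X 3 ⊔ X n)
      + ∑ i ∈ Finset.Icc 4 n, Module.finrank K ↥(X 2 ⊔ X (i - 1) ⊔ X i)
    ≤ Module.finrank K ↥(X 1 ⊔ X 3) + Module.finrank K ↥(X 1 ⊔ X n)
      + (∑ i ∈ Finset.Icc 3 n, Module.finrank K ↥(X 2 ⊔ X i))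
      + ∑ i ∈ Finset.Icc 4 n, Module.finrank K ↥(X (i - 1) ⊔ X i) := by
  obtain ⟨C, hC⟩ : ∃ C, C = X 2 ⊓ X n := ⟨_, rfl⟩
  have hC2 : C ≤ X 2 := hC ▸ inf_le_left
  have hCn : C ≤ X n := hC ▸ inf_le_right
  have hdim := Submodule.finrank_sup_add_finrank_inf_eq (X 2) (X n)
  rw [← hC] at hdim
  have key : ∀ m, 3 ≤ m →
      Module.finrank K ↥(C ⊔ X 3) + (∑ i ∈ Finset.Icc 3 m, Module.finrank K (X i))
        + Module.finrank K ↥(X 2 ⊔ X m)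
        + ∑ i ∈ Finset.Icc 4 m, Module.finrank K ↥(X 2 ⊔ X (i - 1) ⊔ X i)
      ≤ Module.finrank K (X 3) + Module.finrank K ↥(C ⊔ X m)
        + (∑ i ∈ Finset.Icc 3 m, Module.finrank K ↥(X 2 ⊔ X i))
        + ∑ i ∈ Finset.Icc 4 m, Module.finrank K ↥(X (i - 1) ⊔ X i) := by
    intro m hm
    induction m, hm using Nat.le_induction with
    | base => simp; omega
    | succ m hm ih =>
      rw [Finset.sum_Icc_succ_top (by omega), Finset.sum_Icc_succ_top (by omega),
        Finset.sum_Icc_succ_top (by omega), Finset.sum_Icc_succ_top (by omega)]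
      have hm1 : m + 1 - 1 = m := rfl
      rw [hm1]
      have h1 := submod_aux (X 2 ⊔ X m) (C ⊔ X m ⊔ X (m+1)) (X 2 ⊔ X m ⊔ X (m+1)) (C ⊔ X m)
        (by order) (by order) (by order)
      have h2 := submod_aux (C ⊔ X (m+1)) (X m ⊔ X (m+1)) (C ⊔ X m ⊔ X (m+1)) (X (m+1))
        (by order) (by order) (by order)
      omega
  have hk := key n (by omega)
  rw [sup_eq_right.2 hCn] at hk
  have h1 := submod_aux (X 2) (C ⊔ X 1) (X 1 ⊔ X 2) C (by order) (by order) (by order)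
  have h2 := submod_aux (X 1 ⊔ X n) (C ⊔ X 1 ⊔ X 3) (X 1 ⊔ X 3 ⊔ X n) (C ⊔ X 1)
    (by order) (by order) (by order)
  have h3 := submod_aux (C ⊔ X 3) (X 1 ⊔ X 3) (C ⊔ X 1 ⊔ X 3) (X 3) (by order) (by order) (by order)
  omega

/-- rank of the image of a set under a family of vectors -/
noncomputable def frk (K : Type*) {ι V : Type*} [Field K] [AddCommGroup V] [Module K V]
    (v : ι → V) (X : Set ι) : ℕ := Module.finrank K (Submodule.span K (v '' X))

theorem frk_of_indep {K ι V : Type*} [Finite ι] [Field K] [AddCommGroup V] [Module K V]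
    {v : ι → V} {I : Set ι} (h : LinearIndepOn K v I) : frk K v I = I.ncard := by
  classical
  have := Fintype.ofFinite I
  have h2 := finrank_span_eq_card h
  rw [frk, Set.image_eq_range, h2, ← Nat.card_eq_fintype_card, Nat.card_coe_set_eq]

theorem frk_mono {K ι V : Type*} [Finite ι] [Field K] [AddCommGroup V] [Module K V]
    (v : ι → V) {I J : Set ι} (h : I ⊆ J) : frk K v I ≤ frk K v J := by
  have : FiniteDimensional K (Submodule.span K (v '' J)) :=
    FiniteDimensional.span_of_finite K (Set.toFinite _)
  exact Submodule.finrank_mono (Submodule.span_mono (Set.image_mono h))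

theorem exists_max {K ι V : Type*} [Finite ι] [Field K] [AddCommGroup V] [Module K V]
    (v : ι → V) (X : Set ι) : ∃ I ⊆ X, LinearIndepOn K v I ∧ I.ncard = frk K v X := by
  obtain ⟨b, hb, -, h1, h2⟩ := exists_linearIndepOn_extension (linearIndepOn_empty K v)
    (Set.empty_subset X)
  refine ⟨b, hb, h2, le_antisymm ((frk_of_indep h2).symm.trans_le (frk_mono v hb)) ?_⟩
  rw [← frk_of_indep h2]
  have : FiniteDimensional K (Submodule.span K (v '' b)) :=
    FiniteDimensional.span_of_finite K (Set.toFinite _)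
  exact Submodule.finrank_mono (Submodule.span_le.2 h1)

theorem exists_aug {K ι V : Type*} [Finite ι] [Field K] [AddCommGroup V] [Module K V]
    {v : ι → V} {I J : Set ι} (hI : LinearIndepOn K v I) (hJ : LinearIndepOn K v J)
    (h : I.ncard < J.ncard) : ∃ e ∈ J, e ∉ I ∧ LinearIndepOn K v (insert e I) := by
  by_contra! hcon
  have : v '' J ⊆ Submodule.span K (v '' I) := by
    rintro _ ⟨e, he, rfl⟩
    by_contra h2
    by_cases heI : e ∈ I
    · exact h2 (Submodule.subset_span ⟨e, heI, rfl⟩)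
    · exact hcon e he heI (hI.insert h2)
  have fd : FiniteDimensional K (Submodule.span K (v '' I)) :=
    FiniteDimensional.span_of_finite K (Set.toFinite _)
  have h3 : frk K v J ≤ frk K v I := Submodule.finrank_mono (Submodule.span_le.2 this)
  rw [frk_of_indep hI, frk_of_indep hJ] at h3
  omega

theorem ncard_sum {ι : Type*} [Finite ι] (X : Set (ι ⊕ ι)) :
    X.ncard = (Sum.inl ⁻¹' X).ncard + (Sum.inr ⁻¹' X).ncard := by
  conv_lhs => rw [← Set.image_preimage_inl_union_image_preimage_inr X]
  rw [Set.ncard_union_eq, Set.ncard_image_of_injective _ Sum.inl_injective,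
    Set.ncard_image_of_injective _ Sum.inr_injective]
  rw [Set.disjoint_left]
  rintro _ ⟨a, _, rfl⟩ ⟨b, _, h⟩
  cases h

section
variable {K L ι V W : Type*} [Finite ι] [Field K] [AddCommGroup V] [Module K V]
  [Field L] [AddCommGroup W] [Module L W]

/-- direct sum of two linear matroids -/
def sumMat (K L : Type*) {ι V W : Type*} [Finite ι] [Field K] [AddCommGroup V] [Module K V]
    [Field L] [AddCommGroup W] [Module L W] (v : ι → V) (w : ι → W) : IndepMatroid (ι ⊕ ι) :=
  IndepMatroid.ofFinite (E := Set.univ) Set.finite_univ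
    (fun I => LinearIndepOn K v (Sum.inl ⁻¹' I) ∧ LinearIndepOn L w (Sum.inr ⁻¹' I))
    (by simp)
    (fun I J hJ hIJ => ⟨hJ.1.mono (Set.preimage_mono hIJ), hJ.2.mono (Set.preimage_mono hIJ)⟩)
    (by
      intro I J hI hJ h
      rw [ncard_sum I, ncard_sum J] at h
      by_cases h1 : (Sum.inl ⁻¹' I).ncard < (Sum.inl ⁻¹' J).ncard
      · obtain ⟨e, he, heI, h2⟩ := exists_aug hI.1 hJ.1 h1
        refine ⟨Sum.inl e, he, heI, ?_, ?_⟩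
        · convert h2 using 1
          ext x; simp
        · convert hI.2 using 1
          ext x; simp
      · obtain ⟨e, he, heI, h2⟩ := exists_aug hI.2 hJ.2 (by omega)
        refine ⟨Sum.inr e, he, heI, ?_, ?_⟩
        · convert hI.1 using 1
          ext x; simp
        · convert h2 using 1
          ext x; simp)
    (fun _ _ => Set.subset_univ _)

theorem sumMat_indep (v : ι → V) (w : ι → W) (I : Set (ι ⊕ ι)) :
    (sumMat K L v w).matroid.Indep I ↔
      LinearIndepOn K v (Sum.inl ⁻¹' I) ∧ LinearIndepOn L w (Sum.inr ⁻¹' I) := by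
  simp [sumMat]

theorem sumMat_rnk (v : ι → V) (w : ι → W) (X : Set (ι ⊕ ι)) :
    (sumMat K L v w).matroid.rnk X = frk K v (Sum.inl ⁻¹' X) + frk L w (Sum.inr ⁻¹' X) := by
  apply IsGreatest.csSup_eq
  constructor
  · obtain ⟨I, hIX, hI, hc⟩ := exists_max (K := K) v (Sum.inl ⁻¹' X)
    obtain ⟨J, hJX, hJ, hd⟩ := exists_max (K := L) w (Sum.inr ⁻¹' X)
    have e1 : Sum.inl ⁻¹' (Sum.inl '' I ∪ Sum.inr '' J : Set (ι ⊕ ι)) = I := by ext x; simp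
    have e2 : Sum.inr ⁻¹' (Sum.inl '' I ∪ Sum.inr '' J : Set (ι ⊕ ι)) = J := by ext x; simp
    refine ⟨Sum.inl '' I ∪ Sum.inr '' J, ?_, ?_, ?_⟩
    · rw [sumMat_indep, e1, e2]; exact ⟨hI, hJ⟩
    · simp [Set.union_subset_iff, Set.image_subset_iff, hIX, hJX]
    · rw [ncard_sum, e1, e2, hc, hd]
  · rintro _ ⟨I, hI, hIX, rfl⟩
    rw [sumMat_indep] at hI
    rw [ncard_sum, ← frk_of_indep hI.1, ← frk_of_indep hI.2]
    exact add_le_add (frk_mono v (Set.preimage_mono hIX)) (frk_mono w (Set.preimage_mono hIX))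

theorem sumMat_kinser [FiniteDimensional K V] [FiniteDimensional L W] (v : ι → V) (w : ι → W)
    (n : ℕ) (hn : 4 ≤ n) : (sumMat K L v w).matroid.MemKinserClass n := by
  intro X _
  have h1 := kinser_sub (fun i => Submodule.span K (v '' (Sum.inl ⁻¹' X i))) n hn
  have h2 := kinser_sub (fun i => Submodule.span L (w '' (Sum.inr ⁻¹' X i))) n hn
  have a1 : ∀ A B, frk K v (A ∪ B) =
      Module.finrank K ↥(Submodule.span K (v '' A) ⊔ Submodule.span K (v '' B)) := by
    intro A B
    rw [frk, Set.image_union, Submodule.span_union]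
  have a2 : ∀ A B, frk L w (A ∪ B) =
      Module.finrank L ↥(Submodule.span L (w '' A) ⊔ Submodule.span L (w '' B)) := by
    intro A B
    rw [frk, Set.image_union, Submodule.span_union]
  have b1 : ∀ A B C, frk K v (A ∪ B ∪ C) = Module.finrank K ↥(Submodule.span K (v '' A) ⊔
      Submodule.span K (v '' B) ⊔ Submodule.span K (v '' C)) := by
    intro A B C
    rw [a1, Set.image_union, Submodule.span_union]
  have b2 : ∀ A B C, frk L w (A ∪ B ∪ C) = Module.finrank L ↥(Submodule.span L (w '' A) ⊔
      Submodule.span L (w '' B) ⊔ Submodule.span L (w '' C)) := by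
    intro A B C
    rw [a2, Set.image_union, Submodule.span_union]
  have c1 : ∀ A, frk K v A = Module.finrank K (Submodule.span K (v '' A)) := fun _ => rfl
  have c2 : ∀ A, frk L w A = Module.finrank L (Submodule.span L (w '' A)) := fun _ => rfl
  simp only [← b1, ← b2] at h1 h2
  simp only [← a1, ← a2] at h1 h2
  simp only [← c1, ← c2] at h1 h2
  simp only [Matroid.KinserIneq, sumMat_rnk, Set.preimage_union, Finset.sum_add_distrib]
  omega

end

theorem linearIndepOn_comp_aux {F ι κ W : Type} [Field F] [AddCommGroup W] [Module F W]
    (φ : κ → W) (f : ι → κ) (hf : Function.Injective f) (I : Set ι) :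
    LinearIndepOn F (φ ∘ f) I ↔ LinearIndepOn F φ (f '' I) :=
  linearIndependent_equiv' (Equiv.Set.image f I hf) rfl

/-- the seven vectors -/
def vec7 (R : Type) [Zero R] [One R] : Fin 7 → Fin 3 → R :=
  ![![1,0,0], ![0,1,0], ![0,0,1], ![1,1,0], ![1,0,1], ![0,1,1], ![1,1,1]]

theorem vec7_pair {K : Type} [Field K] {i j : Fin 7} (h : i ≠ j) :
    LinearIndepOn K (vec7 K) {i, j} := by
  rw [LinearIndepOn.pair_iff _ h]
  intro c d hcd
  have h0 := congrFun hcd 0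
  have h1 := congrFun hcd 1
  have h2 := congrFun hcd 2
  fin_cases i <;> fin_cases j <;> simp [vec7] at h h0 h1 h2 ⊢ <;> grind

theorem vec7_basis {K : Type} [Field K] : LinearIndepOn K (vec7 K) {0, 1, 2} := by
  rw [linearIndepOn_insert (by decide)]
  refine ⟨vec7_pair (by decide), ?_⟩
  rw [Set.image_pair, Submodule.mem_span_pair]
  rintro ⟨a, b, h⟩
  have h0 := congrFun h 0
  simp [vec7] at h0

/-- Two families with the same independent sets. -/
theorem transfer {K F V W : Type} [Field K] [Field F] [AddCommGroup V] [Module K V]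
    [AddCommGroup W] [Module F W] {v : Fin 7 → V} {ψ : Fin 7 → W}
    (h : ∀ I, LinearIndepOn F ψ I ↔ LinearIndepOn K v I) (i j k : Fin 7)
    (hk : k ∉ ({i, j} : Set (Fin 7)))
    (hij : LinearIndepOn K v {i, j}) {x y : K} (hv : x • v i + y • v j = v k) :
    ∃ a b : F, ψ k = a • ψ i + b • ψ j := by
  have h1 : ¬ LinearIndepOn K v (insert k {i, j}) := by
    rw [linearIndepOn_insert hk]
    rintro ⟨-, h2⟩
    apply h2
    rw [Set.image_pair, Submodule.mem_span_pair]
    exact ⟨x, y, hv⟩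
  rw [← h, linearIndepOn_insert hk, h] at h1
  have h2 : ψ k ∈ Submodule.span F (ψ '' {i, j}) := by
    by_contra h3
    exact h1 ⟨hij, h3⟩
  rw [Set.image_pair, Submodule.mem_span_pair] at h2
  obtain ⟨a, b, h3⟩ := h2
  exact ⟨a, b, h3.symm⟩

theorem coeffs {F W : Type} [Field F] [AddCommGroup W] [Module F W] {ψ : Fin 7 → W}
    (h : LinearIndepOn F ψ {0, 1, 2}) (x y z : F)
    (h0 : x • ψ 0 + y • ψ 1 + z • ψ 2 = 0) : x = 0 ∧ y = 0 ∧ z = 0 := by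
  have h1 : LinearIndependent F ![ψ 0, ψ 1, ψ 2] := by
    have h3 : LinearIndependent F (fun x : ({0, 1, 2} : Set (Fin 7)) => ψ x) := h
    have h4 := h3.comp (fun i : Fin 3 => (⟨![0, 1, 2] i, by fin_cases i <;> simp⟩ :
      ({0, 1, 2} : Set (Fin 7)))) (by
        intro i j hij
        have := congrArg Subtype.val hij
        revert this
        revert i j
        decide)
    convert h4 using 1
    ext i
    fin_cases i <;> rfl
  rw [Fintype.linearIndependent_iff] at h1
  have h2 := h1 ![x, y, z] (by simpa [Fin.sum_univ_three] using h0)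
  exact ⟨h2 0, h2 1, h2 2⟩

theorem structure7 {K F W : Type} [Field K] [Field F]
    [AddCommGroup W] [Module F W] {ψ : Fin 7 → W}
    (h : ∀ I, LinearIndepOn F ψ I ↔ LinearIndepOn K (vec7 K) I) :
    ∃ d1 d2 e1 e3 f2 f3 y y' y'' : F, ψ 3 = d1 • ψ 0 + d2 • ψ 1 ∧ ψ 4 = e1 • ψ 0 + e3 • ψ 2 ∧
      ψ 5 = f2 • ψ 1 + f3 • ψ 2 ∧ y * d1 = y' * e1 ∧ y * d2 = y'' * f2 ∧ y' * e3 = y'' * f3 ∧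
      y ≠ 0 ∧ y' ≠ 0 ∧ y'' ≠ 0 ∧ d1 ≠ 0 ∧ d2 ≠ 0 ∧ e3 ≠ 0 := by
  have hp : ∀ i j, i ≠ j → ∀ x : F, ψ j ≠ x • ψ i := by
    intro i j hij x hx
    have h1 := (h {i, j}).2 (vec7_pair hij)
    rw [LinearIndepOn.pair_iff _ hij] at h1
    have := h1 x (-1) (by rw [hx]; simp)
    simp at this
  have hb := coeffs ((h _).2 vec7_basis)
  obtain ⟨d1, d2, hd⟩ := transfer h 0 1 3 (by decide) (vec7_pair (by decide)) (x := 1) (y := 1)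
    (by ext i; fin_cases i <;> simp [vec7])
  obtain ⟨e1, e3, he⟩ := transfer h 0 2 4 (by decide) (vec7_pair (by decide)) (x := 1) (y := 1)
    (by ext i; fin_cases i <;> simp [vec7])
  obtain ⟨f2, f3, hf⟩ := transfer h 1 2 5 (by decide) (vec7_pair (by decide)) (x := 1) (y := 1)
    (by ext i; fin_cases i <;> simp [vec7])
  obtain ⟨x, y, h1⟩ := transfer h 2 3 6 (by decide) (vec7_pair (by decide)) (x := 1) (y := 1)
    (by ext i; fin_cases i <;> simp [vec7])
  obtain ⟨x', y', h2⟩ := transfer h 1 4 6 (by decide) (vec7_pair (by decide)) (x := 1) (y := 1)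
    (by ext i; fin_cases i <;> simp [vec7])
  obtain ⟨x'', y'', h3⟩ := transfer h 0 5 6 (by decide) (vec7_pair (by decide)) (x := 1) (y := 1)
    (by ext i; fin_cases i <;> simp [vec7])
  have c1 := hb (y * d1 - y' * e1) (y * d2 - x') (x - y' * e3) (by
    have := h1.symm.trans h2
    rw [hd, he, ← sub_eq_zero] at this
    rw [← this]; module)
  have c2 := hb (y * d1 - x'') (y * d2 - y'' * f2) (x - y'' * f3) (by
    have := h1.symm.trans h3
    rw [hd, hf, ← sub_eq_zero] at this
    rw [← this]; module)
  refine ⟨d1, d2, e1, e3, f2, f3, y, y', y'', hd, he, hf, by grind, by grind, by grind,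
    ?_, ?_, ?_, ?_, ?_, ?_⟩
  · rintro rfl; exact hp 2 6 (by decide) x (by simpa using h1)
  · rintro rfl; exact hp 1 6 (by decide) x' (by simpa using h2)
  · rintro rfl; exact hp 0 6 (by decide) x'' (by simpa using h3)
  · rintro rfl; exact hp 1 3 (by decide) d2 (by simpa using hd)
  · rintro rfl; exact hp 0 3 (by decide) d1 (by simpa using hd)
  · rintro rfl; exact hp 0 4 (by decide) e1 (by simpa using he)

theorem fano_rel : (1 : ZMod 2) • vec7 (ZMod 2) 3 + (1 : ZMod 2) • vec7 (ZMod 2) 4 =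
    vec7 (ZMod 2) 5 := by decide

theorem nonFano_rel : ¬ ∃ a b : ZMod 3, a • vec7 (ZMod 3) 3 + b • vec7 (ZMod 3) 4 =
    vec7 (ZMod 3) 5 := by decide

theorem fano_char {F W : Type} [Field F]
    [AddCommGroup W] [Module F W] {ψ : Fin 7 → W}
    (h : ∀ I, LinearIndepOn F ψ I ↔ LinearIndepOn (ZMod 2) (vec7 (ZMod 2)) I) : (2 : F) = 0 := by
  obtain ⟨d1, d2, e1, e3, f2, f3, y, y', y'', hd, he, hf, r1, r2, r3, hy, hy', hy'', n1, n2, n3⟩ :=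
    structure7 h
  obtain ⟨p, q, h1⟩ := transfer h 3 4 5 (by decide) (vec7_pair (by decide)) (x := 1) (y := 1) fano_rel
  have hb := coeffs ((h _).2 vec7_basis) (p * d1 + q * e1) (p * d2 - f2) (q * e3 - f3) (by
    rw [hd, he, hf, ← sub_eq_zero] at h1
    rw [← neg_eq_zero, ← h1]; module)
  obtain ⟨b1, b2, b3⟩ := hb
  have t1 : y = p * y'' := mul_right_cancel₀ n2 (by linear_combination r2 - y'' * b2)
  have t2 : y' = q * y'' := mul_right_cancel₀ n3 (by linear_combination r3 - y'' * b3)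
  have hne : y * d1 ≠ 0 := mul_ne_zero hy n1
  apply (mul_eq_zero.1 (show 2 * (y * d1) = 0 from ?_)).resolve_right hne
  subst t1 t2
  linear_combination r1 + y'' * b1

theorem nonFano_char {F W : Type} [Field F]
    [AddCommGroup W] [Module F W] {ψ : Fin 7 → W}
    (h : ∀ I, LinearIndepOn F ψ I ↔ LinearIndepOn (ZMod 3) (vec7 (ZMod 3)) I) : (2 : F) ≠ 0 := by
  intro h2
  obtain ⟨d1, d2, e1, e3, f2, f3, y, y', y'', hd, he, hf, r1, r2, r3, hy, hy', hy'', n1, n2, n3⟩ :=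
    structure7 h
  have h1 : LinearIndepOn (ZMod 3) (vec7 (ZMod 3)) (insert 5 {3, 4}) := by
    rw [linearIndepOn_insert (by decide)]
    refine ⟨vec7_pair (by decide), ?_⟩
    rw [Set.image_pair, Submodule.mem_span_pair]
    exact nonFano_rel
  rw [← h, linearIndepOn_insert (by decide), Set.image_pair, Submodule.mem_span_pair] at h1
  refine h1.2 ⟨-y / y'', y' / y'', ?_⟩
  apply smul_right_injective W hy''
  simp only [smul_add]
  rw [smul_smul, smul_smul, mul_div_cancel₀ _ hy'', mul_div_cancel₀ _ hy'', hd, he, hf]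
  have e0 : -y * d1 + y' * e1 = 0 := by linear_combination -r1
  have e1 : -y * d2 = y'' * f2 := by linear_combination r2 - y * d2 * h2
  simp only [smul_add, smul_smul]
  rw [e1, r3, ← add_zero ((y'' * f2) • ψ 1 + _), ← zero_smul F (ψ 0), ← e0]
  module

theorem Matroid.exists_memKinserClass_forall_not_isRepOver :
    ∃ (α : Type) (M : Matroid α), M.Finite ∧ (∀ n : ℕ, 4 ≤ n → M.MemKinserClass n) ∧
      ∀ (𝔽 : Type) (_ : Field 𝔽), ¬ M.IsRepOver 𝔽 := by
  refine ⟨Fin 7 ⊕ Fin 7, (sumMat (ZMod 2) (ZMod 3) (vec7 (ZMod 2)) (vec7 (ZMod 3))).matroid,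
    ⟨Set.toFinite _⟩, fun n hn => sumMat_kinser _ _ n hn, ?_⟩
  rintro F _ ⟨W, _, _, φ, hφ⟩
  have hφ' : ∀ I : Set (Fin 7 ⊕ Fin 7), LinearIndepOn F φ I ↔
      LinearIndepOn (ZMod 2) (vec7 (ZMod 2)) (Sum.inl ⁻¹' I) ∧
        LinearIndepOn (ZMod 3) (vec7 (ZMod 3)) (Sum.inr ⁻¹' I) := by
    intro I
    rw [← sumMat_indep, hφ]
    exact ⟨fun h => ⟨Set.subset_univ _, h⟩, fun h => h.2⟩
  have h2 : (2 : F) = 0 := by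
    apply fano_char (ψ := φ ∘ Sum.inl)
    intro I
    rw [linearIndepOn_comp_aux _ _ Sum.inl_injective, hφ']
    simp [Set.preimage_image_eq _ Sum.inl_injective]
  have h3 : (2 : F) ≠ 0 := by
    apply nonFano_char (ψ := φ ∘ Sum.inr)
    intro I
    rw [linearIndepOn_comp_aux _ _ Sum.inr_injective, hφ']
    simp [Set.preimage_image_eq _ Sum.inr_injective]
  exact h3 h2
end

section
/- For every integer n ≥ 5 there exists a finite matroid M such that M satisfies the (n−1)-th Kinser inequality for every family of n−1 subsets of its ground set, but M violates the n-th Kinser inequality for some family of n subsets of its ground set. In other words, for every n ≥ 5 the containment K_n ⊆ K_{n−1} is proper. -/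
open Finset

universe u v

namespace KinserAux

/-! ### Kinser inequality for subspaces -/
section Linear
variable {V : Type*} [AddCommGroup V] [Module ℚ V] [FiniteDimensional ℚ V]

/-- The dimension of a subspace. -/
noncomputable def dm (U : Submodule ℚ V) : ℕ := Module.finrank ℚ U

lemma dm_add (P Q : Submodule ℚ V) : dm (P ⊔ Q) + dm (P ⊓ Q) = dm P + dm Q :=
  Submodule.finrank_sup_add_finrank_inf_eq P Q

lemma dm_mono {P Q : Submodule ℚ V} (h : P ≤ Q) : dm P ≤ dm Q := Submodule.finrank_mono h

lemma step_ineq (P Q T Z : Submodule ℚ V) (hP : Z ≤ P) (hQ : Z ≤ Q) :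
    dm T + dm (P ⊔ Q ⊔ T) + dm Z ≤ dm (P ⊔ T) + dm (Q ⊔ T) + dm (Z ⊓ T) := by
  have h1 := dm_add (P ⊔ T) (Q ⊔ T)
  have h2 := dm_add Z T
  have h3 : Z ⊔ T ≤ (P ⊔ T) ⊓ (Q ⊔ T) :=
    le_inf (sup_le_sup_right hP T) (sup_le_sup_right hQ T)
  have h4 := dm_mono h3
  have h5 : (P ⊔ T) ⊔ (Q ⊔ T) = P ⊔ Q ⊔ T := by
    rw [← sup_sup_distrib_right]
  rw [h5] at h1
  omega

lemma chain_ineq (U : ℕ → Submodule ℚ V) (k : ℕ) :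
    ∃ Z : Submodule ℚ V, Z ≤ U 2 ∧ Z ≤ U 3 ∧ Z ≤ U (k + 3) ∧
      (∑ i ∈ Finset.Icc 3 (k + 3), dm (U i)) + dm (U 2)
        + ∑ i ∈ Finset.Icc 4 (k + 3), dm (U 2 ⊔ U (i - 1) ⊔ U i)
      ≤ (∑ i ∈ Finset.Icc 3 (k + 3), dm (U 2 ⊔ U i))
        + (∑ i ∈ Finset.Icc 4 (k + 3), dm (U (i - 1) ⊔ U i)) + dm Z := by
  induction k with
  | zero =>
    refine ⟨U 2 ⊓ U 3, inf_le_left, inf_le_right, inf_le_right, ?_⟩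
    have h1 := dm_add (U 2) (U 3)
    simp
    omega
  | succ k ih =>
    obtain ⟨Z, h2, h3, hk, h⟩ := ih
    refine ⟨Z ⊓ U (k + 4), inf_le_left.trans h2, inf_le_left.trans h3, inf_le_right, ?_⟩
    have hs := step_ineq (U 2) (U (k + 3)) (U (k + 4)) Z h2 hk
    have hI3 : ∀ f : ℕ → ℕ, ∑ i ∈ Finset.Icc 3 (k + 1 + 3), f i
        = ∑ i ∈ Finset.Icc 3 (k + 3), f i + f (k + 4) := fun f =>
      Finset.sum_Icc_succ_top (a := 3) (b := k + 3) (by omega) f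
    have hI4 : ∀ f : ℕ → ℕ, ∑ i ∈ Finset.Icc 4 (k + 1 + 3), f i
        = ∑ i ∈ Finset.Icc 4 (k + 3), f i + f (k + 4) := fun f =>
      Finset.sum_Icc_succ_top (a := 4) (b := k + 3) (by omega) f
    rw [hI3, hI3, hI4, hI4]
    simp only [show k + 4 - 1 = k + 3 by omega]
    omega

lemma linear_kinser (U : ℕ → Submodule ℚ V) (n : ℕ) (hn : 4 ≤ n) :
    (∑ i ∈ Finset.Icc 3 n, dm (U i)) + dm (U 1 ⊔ U 2) + dm (U 1 ⊔ U 3 ⊔ U n)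
      + ∑ i ∈ Finset.Icc 4 n, dm (U 2 ⊔ U (i - 1) ⊔ U i)
    ≤ dm (U 1 ⊔ U 3) + dm (U 1 ⊔ U n)
      + (∑ i ∈ Finset.Icc 3 n, dm (U 2 ⊔ U i))
      + ∑ i ∈ Finset.Icc 4 n, dm (U (i - 1) ⊔ U i) := by
  obtain ⟨k, rfl⟩ : ∃ k, n = k + 3 := ⟨n - 3, by omega⟩
  obtain ⟨Z, h2, h3, hk, h⟩ := chain_ineq U k
  have hs := step_ineq (U 3) (U (k + 3)) (U 1) Z h3 hk
  have e1 := dm_add (U 1) (U 2)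
  have e2 := dm_mono (inf_le_inf_right (U 1) h2)
  rw [inf_comm (U 2)] at e2
  rw [show U 3 ⊔ U (k + 3) ⊔ U 1 = U 1 ⊔ U 3 ⊔ U (k + 3) by rw [sup_comm, sup_assoc],
    sup_comm (U 3), sup_comm (U (k + 3))] at hs
  omega
end Linear

/-! ### Generic specialisation -/
lemma exists_good_point {σ ι : Type*} (F : Finset ι) (P : ι → MvPolynomial σ ℚ)
    (h : ∀ i ∈ F, ∃ t : σ → ℚ, MvPolynomial.eval t (P i) ≠ 0) :
    ∃ t : σ → ℚ, ∀ i ∈ F, MvPolynomial.eval t (P i) ≠ 0 := by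
  have hne : ∏ i ∈ F, P i ≠ 0 := by
    rw [Finset.prod_ne_zero_iff]
    rintro i hi h0
    obtain ⟨t, ht⟩ := h i hi
    simp [h0] at ht
  by_contra! hcon
  apply hne
  apply MvPolynomial.funext
  intro t
  obtain ⟨i, hi, h0⟩ := hcon t
  rw [map_prod, map_zero]
  exact Finset.prod_eq_zero hi h0

/-! ### Sparse paving matroids -/
section Sparse
variable {E J : Type} [Fintype E] [DecidableEq E]

/-- Independence in the sparse paving matroid of rank `R` with circuit-hyperplanes `H`. -/
def SpIndep (R : ℕ) (H : J → Finset E) (I : Finset E) : Prop :=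
  I.card ≤ R ∧ ∀ j, I ≠ H j

/-- Any two distinct circuit-hyperplanes are far apart. -/
structure SparseFam (R : ℕ) (H : J → Finset E) : Prop where
  pos : 0 < R
  card_eq : ∀ j, (H j).card = R
  far : ∀ j j', j ≠ j' → 2 ≤ (H j \ H j').card

variable {R : ℕ} {H : J → Finset E}

lemma SparseFam.insert_ne (hH : SparseFam R H) {I : Finset E} {e f : E} (he : e ∉ I)
    (hef : e ≠ f) (hI : I.card + 1 = R) :
    (∀ j, insert e I ≠ H j) ∨ (∀ j, insert f I ≠ H j) := by
  by_contra! hcon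
  obtain ⟨⟨j, hj⟩, ⟨j', hj'⟩⟩ := hcon
  have hne : j ≠ j' := by
    rintro rfl
    have : e ∈ insert f I := by rw [hj', ← hj]; simp
    simp [he, hef] at this
  have h2 := hH.far j j' hne
  have hs : H j \ H j' ⊆ {e} := by
    rw [← hj, ← hj']
    intro x hx
    simp only [mem_sdiff, mem_insert, not_or] at hx
    simp only [mem_singleton]
    tauto
  have := Finset.card_le_card hs
  simp at this
  omega

lemma SparseFam.indep_of_card_lt (hH : SparseFam R H) {I : Finset E} (hI : I.card < R) :
    SpIndep R H I := ⟨hI.le, fun j h => by have := hH.card_eq j; rw [← h] at this; omega⟩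

lemma SparseFam.exists_ext (hH : SparseFam R H) {I S : Finset E} (hIS : I ⊆ S)
    (hI : I.card < R) (hS : R < S.card) :
    ∃ K, I ⊆ K ∧ K ⊆ S ∧ K.card = R ∧ SpIndep R H K := by
  obtain ⟨I', h1, h2, h3⟩ := Finset.exists_subsuperset_card_eq hIS
    (show I.card ≤ R - 1 by omega) (by omega)
  have hc : 1 < (S \ I').card := by
    rw [Finset.card_sdiff_of_subset h2]; omega
  obtain ⟨e, he, f, hf, hef⟩ := Finset.one_lt_card.1 hc
  simp only [mem_sdiff] at he hf
  have key : ∀ g, g ∈ S → g ∉ I' → (∀ j, insert g I' ≠ H j) →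
      ∃ K, I ⊆ K ∧ K ⊆ S ∧ K.card = R ∧ SpIndep R H K := by
    intro g hg hg' h
    have hcard : (insert g I').card = R := by
      rw [Finset.card_insert_of_notMem hg']; have := hH.pos; omega
    exact ⟨insert g I', h1.trans (Finset.subset_insert _ _), Finset.insert_subset hg h2, hcard,
      hcard.le, h⟩
  rcases hH.insert_ne he.2 hef (by have := hH.pos; omega) with h | h
  · exact key e he.1 he.2 h
  · exact key f hf.1 hf.2 h

/-- The sparse paving matroid. -/
noncomputable def spM (hH : SparseFam R H) : Matroid E :=
  (IndepMatroid.ofFinset Set.univ (SpIndep R H)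
    (hH.indep_of_card_lt (by simpa using hH.pos))
    (by
      intro I K hK hIK
      rcases eq_or_ne I K with rfl | hne
      · exact hK
      · have := Finset.card_lt_card (hIK.ssubset_of_ne hne)
        exact hH.indep_of_card_lt (by have := hK.1; omega))
    (by
      intro I K hI hK hlt
      by_cases hc : I.card + 1 < R
      · obtain ⟨e, he, he'⟩ := Finset.exists_mem_notMem_of_card_lt_card hlt
        refine ⟨e, he, he', hH.indep_of_card_lt ?_⟩
        rw [Finset.card_insert_of_notMem he']; exact hc
      · have hK1 := hK.1
        by_cases h1 : 1 < (K \ I).card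
        · obtain ⟨e, he, f, hf, hef⟩ := Finset.one_lt_card.1 h1
          simp only [mem_sdiff] at he hf
          rcases hH.insert_ne he.2 hef (by omega) with h | h
          · exact ⟨e, he.1, he.2, by rw [Finset.card_insert_of_notMem he.2]; omega, h⟩
          · exact ⟨f, hf.1, hf.2, by rw [Finset.card_insert_of_notMem hf.2]; omega, h⟩
        · obtain ⟨e, he, he'⟩ := Finset.exists_mem_notMem_of_card_lt_card hlt
          refine ⟨e, he, he', ?_⟩
          have hsub : insert e I = K := by
            symm
            apply Finset.eq_of_subset_of_card_le
            · intro x hx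
              by_cases hxI : x ∈ I
              · exact Finset.mem_insert_of_mem hxI
              · have := Finset.card_le_one.1 (not_lt.1 h1) x (by simp [hx, hxI]) e
                  (by simp [he, he'])
                simp [this]
            · rw [Finset.card_insert_of_notMem he']; omega
          rw [hsub]; exact hK)
    (fun _ _ => Set.subset_univ _)).matroid

lemma spM_indep (hH : SparseFam R H) (I : Finset E) : (spM hH).Indep ↑I ↔ SpIndep R H I := by
  unfold spM
  rw [IndepMatroid.matroid_Indep, IndepMatroid.ofFinset_indep]

lemma spM_finite (hH : SparseFam R H) : (spM hH).Finite := ⟨Set.toFinite _⟩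

lemma spM_E (hH : SparseFam R H) : (spM hH).E = Set.univ := rfl

lemma rnk_set_bdd (M : Matroid E) (S : Set E) :
    BddAbove {n : ℕ | ∃ I, M.Indep I ∧ I ⊆ S ∧ I.ncard = n} := by
  refine ⟨S.ncard, ?_⟩
  rintro n ⟨I, -, h, rfl⟩
  exact Set.ncard_le_ncard h (Set.toFinite _)

lemma le_rnk (hH : SparseFam R H) {I : Finset E} {S : Set E} (hI : SpIndep R H I)
    (h : ↑I ⊆ S) : I.card ≤ (spM hH).rnk S := by
  apply le_csSup (rnk_set_bdd _ _)
  exact ⟨I, (spM_indep hH I).2 hI, h, Set.ncard_coe_finset I⟩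

lemma exists_rnk (hH : SparseFam R H) (S : Set E) :
    ∃ I : Finset E, SpIndep R H I ∧ ↑I ⊆ S ∧ I.card = (spM hH).rnk S := by
  classical
  have hmem := Nat.sSup_mem (s := {n : ℕ | ∃ I, (spM hH).Indep I ∧ I ⊆ S ∧ I.ncard = n})
    ⟨0, ∅, (spM hH).empty_indep, Set.empty_subset _, Set.ncard_empty _⟩ (rnk_set_bdd _ _)
  obtain ⟨I, h1, h2, h3⟩ := hmem
  obtain ⟨I', rfl⟩ : ∃ I' : Finset E, (I' : Set E) = I := ⟨(Set.toFinite I).toFinset, by simp⟩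
  refine ⟨I', (spM_indep hH I').1 h1, h2, ?_⟩
  rw [← Set.ncard_coe_finset I', h3]; rfl

lemma rnk_ge_of_card (hH : SparseFam R H) {S : Finset E} (hS : R < S.card) :
    R ≤ (spM hH).rnk S := by
  obtain ⟨K, -, h2, h3, h4⟩ := hH.exists_ext (Finset.empty_subset S) (by simpa using hH.pos) hS
  refine h3.symm.le.trans ?_
  exact le_rnk hH h4 (by exact_mod_cast h2)

lemma rnk_le_of_H (hH : SparseFam R H) (j : J) : (spM hH).rnk (H j : Set E) ≤ R - 1 := by
  obtain ⟨I, h1, h2, h3⟩ := exists_rnk hH (H j : Set E)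
  have h2' : I ⊆ H j := by exact_mod_cast h2
  have := Finset.card_lt_card (h2'.ssubset_of_ne (h1.2 j))
  rw [hH.card_eq j] at this
  omega

/-- A rational realisation in which only `H j` has been relaxed. -/
structure Realises {V : Type} [AddCommGroup V] [Module ℚ V] (R : ℕ) (H : J → Finset E) (j : J)
    (v : E → V) : Prop where
  indep : ∀ S : Finset E, S.card = R → (∀ j, S ≠ H j) →
    LinearIndependent ℚ (fun x : S => v x)
  dep : ∀ j', j' ≠ j → dm (Submodule.span ℚ (v '' (H j' : Set E))) < R

variable {V : Type} [AddCommGroup V] [Module ℚ V] [FiniteDimensional ℚ V]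

lemma Realises.rnk_le (hH : SparseFam R H) (hE : R < Fintype.card E) {j : J} {v : E → V}
    (hv : Realises R H j v) (S : Set E) :
    (spM hH).rnk S ≤ dm (Submodule.span ℚ (v '' S)) := by
  obtain ⟨I, h1, h2, h3⟩ := exists_rnk hH S
  obtain ⟨K, hIK, hK, hK'⟩ : ∃ K : Finset E, I ⊆ K ∧ K.card = R ∧ SpIndep R H K := by
    rcases h1.1.lt_or_eq with hlt | heq
    · obtain ⟨K, a, b, c, d⟩ := hH.exists_ext (Finset.subset_univ I) hlt (by simpa using hE)
      exact ⟨K, a, c, d⟩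
    · exact ⟨I, subset_rfl, heq, h1⟩
  have hli := hv.indep K hK hK'.2
  have hli2 : LinearIndependent ℚ (fun x : I => v x) :=
    hli.comp (fun x : I => (⟨x.1, hIK x.2⟩ : K)) (by
      intro x y hxy; exact Subtype.ext (congrArg (fun z : K => z.1) hxy))
  have hf : dm _ = _ := finrank_span_eq_card hli2
  rw [← h3, ← Fintype.card_coe I, ← hf]
  apply dm_mono
  apply Submodule.span_mono
  rintro _ ⟨x, rfl⟩
  exact ⟨x, h2 x.2, rfl⟩

lemma Realises.le_rnk (hH : SparseFam R H) (hR : Module.finrank ℚ V = R) {j : J} {v : E → V}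
    (hv : Realises R H j v) (S : Set E) (hS : S ≠ H j) :
    dm (Submodule.span ℚ (v '' S)) ≤ (spM hH).rnk S := by
  classical
  obtain ⟨S, rfl⟩ : ∃ I' : Finset E, (I' : Set E) = S := ⟨(Set.toFinite S).toFinset, by simp⟩
  have hle : dm (Submodule.span ℚ (v '' (S : Set E))) ≤ R := by
    rw [← hR]; exact Submodule.finrank_le _
  by_cases h : R < S.card
  · exact hle.trans (rnk_ge_of_card hH h)
  by_cases h2 : ∃ j', S = H j'
  · obtain ⟨j', rfl⟩ := h2
    have := hv.dep j' (by rintro rfl; exact hS rfl)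
    have hp : 0 < (H j').card := by rw [hH.card_eq]; exact hH.pos
    obtain ⟨x, hx⟩ := Finset.card_pos.1 hp
    have h4 := KinserAux.le_rnk hH (I := (H j').erase x) (S := (H j' : Set E))
      (hH.indep_of_card_lt (by
        rw [Finset.card_erase_of_mem hx, hH.card_eq]; have := hH.pos; omega))
      (by exact_mod_cast Finset.erase_subset _ _)
    rw [Finset.card_erase_of_mem hx, hH.card_eq] at h4
    omega
  · push Not at h2
    have h4 := KinserAux.le_rnk hH (I := S) (S := (S : Set E)) ⟨not_lt.1 h, h2⟩ subset_rfl
    refine le_trans ?_ h4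
    rw [← Finset.coe_image]
    exact (finrank_span_finset_le_card _).trans Finset.card_image_le

lemma memKinserClass_of_realises [Fintype J] (hH : SparseFam R H) (hE : R < Fintype.card E)
    (hR : Module.finrank ℚ V = R) (hv : ∀ j, ∃ v : E → V, Realises R H j v) (n : ℕ)
    (hn : 4 ≤ n) (hJ : 2 * n - 3 < Fintype.card J) : (spM hH).MemKinserClass n := by
  classical
  intro X _
  by_contra hcon
  have hinj : Function.Injective (fun j => (H j : Set E)) := by
    intro j j' h
    by_contra hne
    have := hH.far j j' hne
    have h' : H j = H j' := Finset.coe_injective h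
    simp [h'] at this
  set T : Finset (Set E) := {X 1 ∪ X 3, X 1 ∪ X n} ∪ (Finset.Icc 3 n).image (fun i => X 2 ∪ X i)
    ∪ (Finset.Icc 4 n).image (fun i => X (i - 1) ∪ X i) with hT
  have hTcard : T.card ≤ 2 * n - 3 := by
    have a1 : ({X 1 ∪ X 3, X 1 ∪ X n} : Finset (Set E)).card ≤ 2 := Finset.card_le_two
    have a2 := Finset.card_image_le (s := Finset.Icc 3 n) (f := fun i => X 2 ∪ X i)
    have a3 := Finset.card_image_le (s := Finset.Icc 4 n) (f := fun i => X (i - 1) ∪ X i)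
    have a4 := Finset.card_union_le ({X 1 ∪ X 3, X 1 ∪ X n} : Finset (Set E))
      ((Finset.Icc 3 n).image (fun i => X 2 ∪ X i))
    have a5 := Finset.card_union_le ({X 1 ∪ X 3, X 1 ∪ X n} ∪
      ((Finset.Icc 3 n).image (fun i => X 2 ∪ X i)))
      ((Finset.Icc 4 n).image (fun i => X (i - 1) ∪ X i))
    simp only [Nat.card_Icc] at a2 a3
    rw [hT]
    omega
  have hmem : ∀ j, (H j : Set E) ∈ T := by
    intro j
    by_contra hj
    obtain ⟨v, hv⟩ := hv j
    apply hcon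
    have lin := linear_kinser (fun i => Submodule.span ℚ (v '' X i)) n hn
    simp only [← Submodule.span_union, ← Set.image_union] at lin
    simp only [hT, Finset.mem_union, Finset.mem_insert, Finset.mem_singleton, Finset.mem_image,
      not_or, not_exists, not_and] at hj
    obtain ⟨⟨⟨b1, b2⟩, b3⟩, b4⟩ := hj
    have lo := hv.rnk_le hH hE
    have hi := hv.le_rnk hH hR
    unfold Matroid.KinserIneq
    have c1 := Finset.sum_le_sum (fun i (_ : i ∈ Finset.Icc 3 n) => lo (X i))
    have c2 := Finset.sum_le_sum (fun i (_ : i ∈ Finset.Icc 4 n) => lo (X 2 ∪ X (i - 1) ∪ X i))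
    have c3 := Finset.sum_le_sum
      (fun i (h : i ∈ Finset.Icc 3 n) => hi (X 2 ∪ X i) (b3 i h))
    have c4 := Finset.sum_le_sum
      (fun i (h : i ∈ Finset.Icc 4 n) => hi (X (i - 1) ∪ X i) (b4 i h))
    have c5 := lo (X 1 ∪ X 2)
    have c6 := lo (X 1 ∪ X 3 ∪ X n)
    have c7 := hi (X 1 ∪ X 3) (fun h => b1 h.symm)
    have c8 := hi (X 1 ∪ X n) (fun h => b2 h.symm)
    omega
  have hle : (Finset.univ.image (fun j => (H j : Set E))).card ≤ T.card := by
    apply Finset.card_le_card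
    intro s hs
    obtain ⟨j, -, rfl⟩ := Finset.mem_image.1 hs
    exact hmem j
  rw [Finset.card_image_of_injective _ hinj, Finset.card_univ] at hle
  omega
end Sparse

/-! ### The concrete family of circuit-hyperplanes -/
section Concrete
variable {m : ℕ}

/-- The ground set: elements `x_j`, `y_i`, and the two elements `a`, `b`. -/
abbrev KE (m : ℕ) : Type := Fin m ⊕ (Fin m ⊕ Bool)

/-- Cyclic successor. -/
def nx (i : Fin m) : Fin m :=
  ⟨if i.1 + 1 = m then 0 else i.1 + 1, by have := i.2; split <;> omega⟩

lemma nx_val (i : Fin m) : (nx i).1 = if i.1 + 1 = m then 0 else i.1 + 1 := rfl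

/-- The rim circuit-hyperplanes. -/
def HA (i : Fin m) : Finset (KE m) :=
  (univ.erase (nx i)).disjSum (({i, nx i} : Finset (Fin m)).disjSum ∅)

/-- The spoke circuit-hyperplanes. -/
def HB (i : Fin m) : Finset (KE m) :=
  ((univ.erase i).erase (nx i)).disjSum (({i} : Finset (Fin m)).disjSum univ)

/-- The rim sets. -/
def HV (i : Fin m) : Finset (KE m) :=
  ((univ.erase i).erase (nx i)).disjSum (({i} : Finset (Fin m)).disjSum ∅)

/-- The hub set. -/
def HU (m : ℕ) : Finset (KE m) :=
  (∅ : Finset (Fin m)).disjSum ((∅ : Finset (Fin m)).disjSum univ)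

/-- Index type of the circuit-hyperplanes. -/
abbrev KJ (m : ℕ) : Type := Fin m ⊕ {i : Fin m // i.1 ≠ 0}

/-- The circuit-hyperplanes. -/
def KH : KJ m → Finset (KE m)
  | Sum.inl i => HA i
  | Sum.inr i => HB i.1

lemma nx_inj {i j : Fin m} (h : nx i = nx j) : i = j := by
  have hi := i.2
  have hj := j.2
  rw [Fin.ext_iff, nx_val, nx_val] at h
  apply Fin.ext
  split_ifs at h <;> omega

lemma nx_ne (hm : 4 ≤ m) (i : Fin m) : nx i ≠ i := by
  have hi := i.2
  rw [Ne, Fin.ext_iff, nx_val]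
  split_ifs <;> omega

lemma nx_nx_ne (hm : 4 ≤ m) (i : Fin m) : nx (nx i) ≠ i := by
  have hi := i.2
  rw [Ne, Fin.ext_iff, nx_val, nx_val]
  split_ifs <;> omega

lemma card_HA (hm : 4 ≤ m) (i : Fin m) : (HA i).card = m + 1 := by
  have : ({i, nx i} : Finset (Fin m)).card = 2 := Finset.card_pair (nx_ne hm i).symm
  simp only [HA, card_disjSum, this, card_empty, Finset.card_erase_of_mem (mem_univ _),
    Finset.card_univ, Fintype.card_fin]
  omega

lemma card_erase2 (hm : 4 ≤ m) (i : Fin m) :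
    ((univ.erase i).erase (nx i) : Finset (Fin m)).card = m - 2 := by
  rw [Finset.card_erase_of_mem (by simp [nx_ne hm i]), Finset.card_erase_of_mem (mem_univ _)]
  simp
  omega

lemma card_HB (hm : 4 ≤ m) (i : Fin m) : (HB i).card = m + 1 := by
  simp only [HB, card_disjSum, card_erase2 hm, card_singleton, Finset.card_univ,
    Fintype.card_bool]
  omega

lemma card_HV (hm : 4 ≤ m) (i : Fin m) : (HV i).card = m - 1 := by
  simp only [HV, card_disjSum, card_erase2 hm, card_singleton, card_empty]
  omega

lemma forb2 (hm : 4 ≤ m) {i j : Fin m} (hij : i ≠ j) :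
    ∃ k, (k = i ∨ k = nx i) ∧ k ≠ j ∧ k ≠ nx j := by
  by_cases h : i = nx j
  · refine ⟨nx i, Or.inr rfl, ?_, ?_⟩
    · rw [h]; exact nx_nx_ne hm j
    · intro h'; exact hij (nx_inj h')
  · exact ⟨i, Or.inl rfl, hij, h⟩

lemma sparseFam_KH (hm : 4 ≤ m) : SparseFam (m + 1) (KH (m := m)) where
  pos := by omega
  card_eq := by
    rintro (i | i)
    · exact card_HA hm i
    · exact card_HB hm i.1
  far := by
    rintro (i | i) (j | j) hij
    · have hij' : i ≠ j := fun h => hij (by rw [h])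
      obtain ⟨k, hk, h1, h2⟩ := forb2 hm hij'
      have hn : nx j ≠ nx i := fun h => hij' (nx_inj h).symm
      refine Finset.one_lt_card.2 ⟨Sum.inl (nx j), ?_, Sum.inr (Sum.inl k), ?_, by simp⟩
      · simp [KH, HA, hn]
      · simp [KH, HA, hk, h1, h2]
    · obtain ⟨j, hj⟩ := j
      obtain ⟨k, hk, hk'⟩ : ∃ k, (k = i ∨ k = nx i) ∧ k ≠ j := by
        by_cases h : i = j
        · exact ⟨nx i, Or.inr rfl, h ▸ nx_ne hm i⟩
        · exact ⟨i, Or.inl rfl, h⟩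
      obtain ⟨l, hl, hl'⟩ : ∃ l, (l = j ∨ l = nx j) ∧ l ≠ nx i := by
        by_cases h : j = nx i
        · exact ⟨nx j, Or.inr rfl, h ▸ nx_ne hm _⟩
        · exact ⟨j, Or.inl rfl, h⟩
      refine Finset.one_lt_card.2 ⟨Sum.inl l, ?_, Sum.inr (Sum.inl k), ?_, by simp⟩
      · simp only [KH, HA, HB, mem_sdiff, inl_mem_disjSum, mem_erase, mem_univ]
        tauto
      · simp [KH, HA, HB, hk, hk']
    · refine Finset.one_lt_card.2 ⟨Sum.inr (Sum.inr true), ?_, Sum.inr (Sum.inr false), ?_, by simp⟩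
      · simp [KH, HA, HB]
      · simp [KH, HA, HB]
    · obtain ⟨j, hj⟩ := j
      obtain ⟨i, hi⟩ := i
      have hij' : i ≠ j := fun h => hij (by subst h; rfl)
      obtain ⟨k, hk, h1, h2⟩ := forb2 hm hij'.symm
      refine Finset.one_lt_card.2 ⟨Sum.inl k, ?_, Sum.inr (Sum.inl i), ?_, by simp⟩
      · simp only [KH, HB, mem_sdiff, inl_mem_disjSum, mem_erase, mem_univ]
        tauto
      · simp [KH, HB, hij']

/-! ### The violation of the Kinser inequality -/

/-- Reduction of a natural number to an index. -/
def idx (hm : 4 ≤ m) (k : ℕ) : Fin m := ⟨k % m, Nat.mod_lt _ (by omega)⟩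

lemma nx_idx (hm : 4 ≤ m) (k : ℕ) (hk : k + 1 < m) : nx (idx hm k) = idx hm (k + 1) := by
  apply Fin.ext
  rw [nx_val]
  simp only [idx, Nat.mod_eq_of_lt hk, Nat.mod_eq_of_lt (show k < m by omega)]
  split_ifs <;> omega

lemma nx_idx_last (hm : 4 ≤ m) : nx (idx hm (m - 1)) = idx hm 0 := by
  apply Fin.ext
  rw [nx_val]
  simp only [idx, Nat.mod_eq_of_lt (show m - 1 < m by omega), Nat.zero_mod]
  split_ifs <;> omega

lemma HV_union_nx (hm : 4 ≤ m) (i : Fin m) : HV i ∪ HV (nx i) = HA i := by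
  have h1 := nx_nx_ne hm i
  have h2 := nx_ne hm i
  have h3 := nx_ne hm (nx i)
  ext (l | k | b)
  · simp only [HV, HA, mem_union, inl_mem_disjSum, mem_erase, mem_univ, and_true]
    constructor
    · rintro (h | h) <;> tauto
    · intro h
      by_cases hl : l = i
      · right; subst hl; exact ⟨fun h => h1 h.symm, h⟩
      · left; exact ⟨h, hl⟩
  · simp [HV, HA]
  · simp [HV, HA]

lemma HU_union (i : Fin m) : HU m ∪ HV i = HB i := by
  ext (l | k | b) <;> simp [HU, HV, HB]

/-- The family violating the Kinser inequality. -/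
def KX (hm : 4 ≤ m) (i : ℕ) : Set (KE m) :=
  if i = 1 then HV (idx hm 0) else if i = 2 then HU m else HV (idx hm (i - 2))

lemma not_kinser (hm : 4 ≤ m) : ¬ (spM (sparseFam_KH hm)).MemKinserClass (m + 1) := by
  intro hK
  have h := hK (KX hm) (fun i _ => by rw [spM_E]; exact Set.subset_univ _)
  have hH := sparseFam_KH hm
  unfold Matroid.KinserIneq at h
  have e1 : KX hm 1 = HV (idx hm 0) := by simp [KX]
  have e2 : KX hm 2 = HU m := by simp [KX]
  have e3 : ∀ i, 3 ≤ i → KX hm i = HV (idx hm (i - 2)) := by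
    intro i hi
    have : i ≠ 1 := by omega
    have : i ≠ 2 := by omega
    simp [KX, *]
  -- left-hand side
  have l1 : ∀ i ∈ Finset.Icc 3 (m + 1), m - 1 ≤ (spM (sparseFam_KH hm)).rnk (KX hm i) := by
    intro i hi
    rw [Finset.mem_Icc] at hi
    rw [e3 i hi.1, ← card_HV hm (idx hm (i - 2))]
    exact le_rnk _ (hH.indep_of_card_lt (by rw [card_HV hm]; omega)) subset_rfl
  have l2 : m + 1 ≤ (spM (sparseFam_KH hm)).rnk (KX hm 1 ∪ KX hm 2) := by
    rw [e1, e2, Set.union_comm, ← Finset.coe_union, HU_union]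
    refine (card_HB hm (idx hm 0)).symm.le.trans (le_rnk _ ⟨(card_HB hm _).le, ?_⟩ subset_rfl)
    rintro (j | ⟨j, hj⟩) h0
    · have h9 : (Sum.inr (Sum.inr true) : KE m) ∈ HB (idx hm 0) := by simp [HB]
      rw [h0] at h9
      simp [KH, HA] at h9
    · have h9 : (Sum.inr (Sum.inl j) : KE m) ∈ HB (idx hm 0) := by rw [h0]; simp [KH, HB]
      simp [HB] at h9
      apply hj
      rw [h9]
      simp [idx]
  have l3 : m + 1 ≤ (spM (sparseFam_KH hm)).rnk (KX hm 1 ∪ KX hm 3 ∪ KX hm (m + 1)) := by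
    rw [e1, e3 3 le_rfl, e3 (m + 1) (by omega), ← Finset.coe_union, ← Finset.coe_union,
      show 3 - 2 = 0 + 1 by rfl, ← nx_idx hm 0 (by omega), HV_union_nx hm]
    apply rnk_ge_of_card
    refine lt_of_eq_of_lt (card_HA hm (idx hm 0)).symm (Finset.card_lt_card ?_)
    rw [Finset.ssubset_iff]
    refine ⟨Sum.inr (Sum.inl (idx hm (m - 1))), ?_, ?_⟩
    · have b0 := (idx hm 0).2
      simp only [HA, inr_mem_disjSum, inl_mem_disjSum, mem_insert, mem_singleton, Fin.ext_iff,
        nx_val]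
      simp only [idx, Nat.mod_eq_of_lt (show m - 1 < m by omega), Nat.zero_mod,
        show ¬ (0 + 1 = m) by omega, if_false]
      omega
    · apply Finset.insert_subset
      · apply Finset.mem_union_right
        simp [HV, show m + 1 - 2 = m - 1 by omega]
      · exact Finset.subset_union_left
  have step : ∀ i, 4 ≤ i → i ≤ m + 1 → KX hm (i - 1) ∪ KX hm i = HA (idx hm (i - 3)) := by
    intro i h4 hi
    rw [e3 i (by omega), e3 (i - 1) (by omega), show i - 1 - 2 = i - 3 by omega,
      show i - 2 = i - 3 + 1 by omega, ← nx_idx hm _ (by omega), ← Finset.coe_union,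
      HV_union_nx hm]
  have l4 : ∀ i ∈ Finset.Icc 4 (m + 1),
      m + 1 ≤ (spM (sparseFam_KH hm)).rnk (KX hm 2 ∪ KX hm (i - 1) ∪ KX hm i) := by
    intro i hi
    rw [Finset.mem_Icc] at hi
    rw [Set.union_assoc, step i hi.1 hi.2, e2, ← Finset.coe_union]
    apply rnk_ge_of_card
    refine lt_of_eq_of_lt (card_HA hm (idx hm (i - 3))).symm (Finset.card_lt_card ?_)
    rw [Finset.ssubset_iff]
    refine ⟨Sum.inr (Sum.inr true), by simp [HA], ?_⟩
    apply Finset.insert_subset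
    · apply Finset.mem_union_left
      simp [HU]
    · exact Finset.subset_union_right
  -- right-hand side
  have rA : ∀ i : Fin m, (spM (sparseFam_KH hm)).rnk (HA i : Set (KE m)) ≤ m := fun i =>
    rnk_le_of_H hH (Sum.inl i)
  have rB : ∀ i : Fin m, i.1 ≠ 0 → (spM (sparseFam_KH hm)).rnk (HB i : Set (KE m)) ≤ m :=
    fun i hi => rnk_le_of_H hH (Sum.inr ⟨i, hi⟩)
  have r1 : (spM (sparseFam_KH hm)).rnk (KX hm 1 ∪ KX hm 3) ≤ m := by
    rw [e1, e3 3 le_rfl, ← Finset.coe_union, show 3 - 2 = 0 + 1 by rfl,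
      ← nx_idx hm 0 (by omega), HV_union_nx hm]
    exact rA _
  have r2 : (spM (sparseFam_KH hm)).rnk (KX hm 1 ∪ KX hm (m + 1)) ≤ m := by
    rw [e1, e3 (m + 1) (by omega), ← nx_idx_last hm, Set.union_comm, ← Finset.coe_union,
      show m + 1 - 2 = m - 1 by omega, HV_union_nx hm]
    exact rA _
  have r3 : ∀ i ∈ Finset.Icc 3 (m + 1),
      (spM (sparseFam_KH hm)).rnk (KX hm 2 ∪ KX hm i) ≤ m := by
    intro i hi
    rw [Finset.mem_Icc] at hi
    rw [e2, e3 i hi.1, ← Finset.coe_union, HU_union]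
    apply rB
    simp only [idx]
    rw [Nat.mod_eq_of_lt (by omega)]
    omega
  have r4 : ∀ i ∈ Finset.Icc 4 (m + 1),
      (spM (sparseFam_KH hm)).rnk (KX hm (i - 1) ∪ KX hm i) ≤ m := by
    intro i hi
    rw [Finset.mem_Icc] at hi
    rw [step i hi.1 hi.2]
    exact rA _
  have s1 := Finset.card_nsmul_le_sum _ _ _ l1
  have s2 := Finset.card_nsmul_le_sum _ _ _ l4
  have s3 := Finset.sum_le_card_nsmul _ _ _ r3
  have s4 := Finset.sum_le_card_nsmul _ _ _ r4
  simp only [Nat.card_Icc, smul_eq_mul] at s1 s2 s3 s4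
  obtain ⟨k, rfl⟩ : ∃ k, m = k + 4 := ⟨m - 4, by omega⟩
  simp only [show k + 4 + 1 + 1 - 3 = k + 3 by omega, show k + 4 + 1 + 1 - 4 = k + 2 by omega,
    show k + 4 - 1 = k + 3 by omega] at s1 s2 s3 s4
  nlinarith

/-! ### Matchings -/

/-- The column `z` may carry the row `y_i`. -/
def Ok (i : Fin m) (z : Option (Fin m)) : Prop := z ≠ some i ∧ z ≠ some (nx i)

lemma not_ok {i : Fin m} {z : Option (Fin m)} (h : ¬ Ok i z) : z = some i ∨ z = some (nx i) := by
  unfold Ok at h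
  tauto

lemma ok_three {i j k : Fin m} (hij : i ≠ j) (hik : i ≠ k) (hjk : j ≠ k) (z : Option (Fin m)) :
    Ok i z ∨ Ok j z ∨ Ok k z := by
  by_contra! hcon
  obtain ⟨h1, h2, h3⟩ := hcon
  have key : ∀ a b : Fin m, a ≠ b → some (nx a) = z → some (nx b) = z → False := by
    intro a b hab ha hb
    rw [← hb] at ha
    exact hab (nx_inj (Option.some.inj ha))
  have key2 : ∀ a b : Fin m, a ≠ b → some a = z → some b = z → False := by
    intro a b hab ha hb
    rw [← hb] at ha
    exact hab (Option.some.inj ha)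
  rcases not_ok h1 with h1 | h1 <;> rcases not_ok h2 with h2 | h2 <;>
    rcases not_ok h3 with h3 | h3
  · exact key2 _ _ hij h1.symm h2.symm
  · exact key2 _ _ hij h1.symm h2.symm
  · exact key2 _ _ hik h1.symm h3.symm
  · exact key _ _ hjk h2.symm h3.symm
  · exact key2 _ _ hjk h2.symm h3.symm
  · exact key _ _ hik h1.symm h3.symm
  · exact key _ _ hij h1.symm h2.symm
  · exact key _ _ hij h1.symm h2.symm

lemma ok_two (hm : 4 ≤ m) {i j : Fin m} (hij : i ≠ j) {z z' : Option (Fin m)} (hz : z ≠ z') :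
    (Ok i z ∨ Ok j z) ∨ (Ok i z' ∨ Ok j z') := by
  by_contra! hcon
  obtain ⟨⟨h1, h2⟩, h3, h4⟩ := hcon
  obtain ⟨k, hk, hk1, hk2⟩ := forb2 hm hij
  have : z = some k ∨ z' = some k := by
    rcases not_ok h1 with h1 | h1 <;> rcases not_ok h3 with h3 | h3 <;> rcases hk with hk | hk <;>
      simp_all
  rcases this with rfl | rfl
  · rcases not_ok h2 with h | h <;> simp_all
  · rcases not_ok h4 with h | h <;> simp_all

lemma exists_match (Y : Finset (Fin m)) (Z : Finset (Option (Fin m)))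
    (hc : Y.card ≤ Z.card) (h1 : ∀ i ∈ Y, ∃ z ∈ Z, Ok i z)
    (h2 : ∀ i ∈ Y, ∀ j ∈ Y, i ≠ j → ∃ z ∈ Z, ∃ z' ∈ Z, z ≠ z' ∧ (Ok i z ∨ Ok j z) ∧
      (Ok i z' ∨ Ok j z')) :
    ∃ σ : Fin m → Option (Fin m), Set.InjOn σ Y ∧ ∀ i ∈ Y, σ i ∈ Z ∧ Ok i (σ i) := by
  classical
  have hall := (Finset.all_card_le_biUnion_card_iff_exists_injective
    (fun i : Y => Z.filter (Ok i.1))).1 (by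
      intro W
      by_cases w3 : 2 < W.card
      · obtain ⟨a, b, c, ha, hb, hcW, hab, hac, hbc⟩ := Finset.two_lt_card_iff.1 w3
        have hWY : W.card ≤ Y.card := by
          have := Finset.card_le_univ W
          simpa using this
        refine hWY.trans (hc.trans (Finset.card_le_card ?_))
        intro z hz
        rw [Finset.mem_biUnion]
        rcases ok_three (fun h => hab (Subtype.ext h)) (fun h => hac (Subtype.ext h))
          (fun h => hbc (Subtype.ext h)) z with h | h | h
        · exact ⟨a, ha, by simp [hz, h]⟩
        · exact ⟨b, hb, by simp [hz, h]⟩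
        · exact ⟨c, hcW, by simp [hz, h]⟩
      by_cases w2 : 1 < W.card
      · obtain ⟨a, ha, b, hb, hab⟩ := Finset.one_lt_card.1 w2
        obtain ⟨z, hz, z', hz', hne, o1, o2⟩ := h2 a.1 a.2 b.1 b.2 (fun h => hab (Subtype.ext h))
        have : 1 < (W.biUnion (fun i : Y => Z.filter (Ok i.1))).card := by
          refine Finset.one_lt_card.2 ⟨z, ?_, z', ?_, hne⟩
          · rw [Finset.mem_biUnion]
            rcases o1 with h | h
            · exact ⟨a, ha, by simp [hz, h]⟩
            · exact ⟨b, hb, by simp [hz, h]⟩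
          · rw [Finset.mem_biUnion]
            rcases o2 with h | h
            · exact ⟨a, ha, by simp [hz', h]⟩
            · exact ⟨b, hb, by simp [hz', h]⟩
        omega
      by_cases w1 : 0 < W.card
      · obtain ⟨a, ha⟩ := Finset.card_pos.1 w1
        obtain ⟨z, hz, ho⟩ := h1 a.1 a.2
        have : 0 < (W.biUnion (fun i : Y => Z.filter (Ok i.1))).card := by
          refine Finset.card_pos.2 ⟨z, ?_⟩
          rw [Finset.mem_biUnion]
          exact ⟨a, ha, by simp [hz, ho]⟩
        omega
      · omega)
  obtain ⟨f, hf, hf'⟩ := hall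
  refine ⟨fun i => if h : i ∈ Y then f ⟨i, h⟩ else none, ?_, ?_⟩
  · intro i hi j hj hij
    have hi' : i ∈ Y := hi
    have hj' : j ∈ Y := hj
    simp only [hi', hj', dif_pos] at hij
    exact congrArg Subtype.val (hf hij)
  · intro i hi
    have := hf' ⟨i, hi⟩
    simpa [hi] using this


/-! ### The representations -/

section Vec
variable {A B : Type} [CommRing A] [CommRing B]

/-- First special coordinate. -/
def al (q : ℕ) (i : Fin m) (e : A) : A := if 2 * i.1 ≤ q ∧ i.1 ≠ 0 then e else 0

/-- Second special coordinate. -/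
def be (q : ℕ) (i : Fin m) (e : A) : A := if 2 * i.1 + 1 ≤ q then e else 0

/-- Coordinates of the vector of `y_i`. -/
def yvec (q : ℕ) (e : A) (c : Fin m → Option (Fin m) → A) (i : Fin m) : Option (Fin m) → A
  | none => c i none
  | some l => if l = i then c i none * al q i e
      else if l = nx i then c i none * be q i e else c i (some l)

/-- Coordinates of the vectors of `a` and `b`. -/
def avec (s : Bool) : Option (Fin m) → A
  | none => if s then 2 else 1
  | some _ => 1

/-- The vectors. -/
def vec (q : ℕ) (e : A) (c : Fin m → Option (Fin m) → A) : KE m → Option (Fin m) → A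
  | Sum.inl j => fun z => if z = some j then 1 else 0
  | Sum.inr (Sum.inl i) => yvec q e c i
  | Sum.inr (Sum.inr s) => avec s

lemma map_vec (φ : A →+* B) (q : ℕ) (e : A) (c : Fin m → Option (Fin m) → A) (x : KE m)
    (z : Option (Fin m)) :
    φ (vec q e c x z) = vec q (φ e) (fun i z => φ (c i z)) x z := by
  have hal : ∀ i : Fin m, φ (al q i e) = al q i (φ e) := by
    intro i; unfold al; split_ifs <;> simp
  have hbe : ∀ i : Fin m, φ (be q i e) = be q i (φ e) := by
    intro i; unfold be; split_ifs <;> simp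
  rcases x with j | i | s
  · simp only [vec]
    split_ifs <;> simp
  · rcases z with _ | l
    · simp [vec, yvec]
    · simp only [vec, yvec]
      split_ifs <;> simp [hal, hbe]
  · rcases z with _ | l
    · cases s
      · simp [vec, avec]
      · simp only [vec, avec, if_true]
        exact map_ofNat φ 2
    · simp [vec, avec]

end Vec

/-- Unit vector. -/
def ev (z : Option (Fin m)) : Option (Fin m) → ℚ := Pi.single z 1

lemma vec_x (q : ℕ) (e : ℚ) (c : Fin m → Option (Fin m) → ℚ) (j : Fin m) :
    vec q e c (Sum.inl j) = ev (some j) := by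
  funext z
  simp [vec, ev, Pi.single_apply]

lemma eq_sum_ev (w : Option (Fin m) → ℚ) : w = ∑ z, w z • ev z := by
  funext y
  simp [ev, Finset.sum_apply, Pi.single_apply]

lemma top_le_of_ev {U : Submodule ℚ (Option (Fin m) → ℚ)} (h : ∀ z, ev z ∈ U) : ⊤ ≤ U := by
  intro w _
  rw [eq_sum_ev w]
  exact Submodule.sum_mem _ fun z _ => Submodule.smul_mem _ _ (h z)

lemma top_le_of_ev_ne {U : Submodule ℚ (Option (Fin m) → ℚ)} (z0 : Option (Fin m))
    (h : ∀ z, z ≠ z0 → ev z ∈ U) {w : Option (Fin m) → ℚ} (hw : w ∈ U) (hw0 : w z0 ≠ 0) :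
    ⊤ ≤ U := by
  apply top_le_of_ev
  intro z
  by_cases hz : z = z0
  · subst hz
    have h1 : w z • ev z = w - ∑ y ∈ univ.erase z, w y • ev y := by
      rw [eq_sub_iff_add_eq, Finset.add_sum_erase univ (fun y => w y • ev y) (mem_univ z)]
      exact (eq_sum_ev w).symm
    have h2 : w z • ev z ∈ U := by
      rw [h1]
      refine Submodule.sub_mem _ hw (Submodule.sum_mem _ fun y hy => ?_)
      exact Submodule.smul_mem _ _ (h y (Finset.ne_of_mem_erase hy))
    exact (Submodule.smul_mem_iff _ hw0).1 h2
  · exact h z hz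

lemma vec_y_zero (q : ℕ) (s : Fin m → Option (Fin m)) (i : Fin m) (h : Ok i (s i)) :
    vec q (0 : ℚ) (fun i => ev (s i)) (Sum.inr (Sum.inl i)) = ev (s i) := by
  obtain ⟨h1, h2⟩ := h
  funext z
  rcases z with _ | l
  · simp [vec, yvec]
  · have hal : al q i (0 : ℚ) = 0 := by simp [al]
    have hbe : be q i (0 : ℚ) = 0 := by simp [be]
    simp only [vec, yvec, hal, hbe, mul_zero]
    split_ifs with h3 h4
    · subst h3
      simp [ev, Pi.single_apply, h1.symm]
    · subst h4
      simp [ev, Pi.single_apply, h2.symm]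
    · rfl

lemma avec_ne (s : Bool) (z : Option (Fin m)) : (avec s z : ℚ) ≠ 0 := by
  rcases z with _ | l <;> cases s <;> simp [avec]

lemma avec_sub : (avec true - avec false : Option (Fin m) → ℚ) = ev none := by
  funext z
  rcases z with _ | l <;> simp [avec, ev]
  norm_num

lemma exists_spec (hm : 4 ≤ m) (q : ℕ) (X Y : Finset (Fin m)) (B : Finset Bool)
    (hcard : X.card + (Y.card + B.card) = m + 1)
    (hA : ∀ i, X.disjSum (Y.disjSum B) ≠ HA i) (hB : ∀ i, X.disjSum (Y.disjSum B) ≠ HB i) :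
    ∃ c : Fin m → Option (Fin m) → ℚ,
      ⊤ ≤ Submodule.span ℚ (vec q 0 c '' (X.disjSum (Y.disjSum B) : Finset (KE m))) := by
  have hXc : X.card + Xᶜ.card = m := by
    rw [Finset.card_add_card_compl, Fintype.card_fin]
  have hXle : X.card ≤ m := by omega
  have hsome : (Xᶜ.map Function.Embedding.some).card = Xᶜ.card := Finset.card_map _
  -- membership facts valid for every choice
  have memx : ∀ c : Fin m → Option (Fin m) → ℚ, ∀ l ∈ X, ev (some l) ∈
      Submodule.span ℚ (vec q 0 c '' (X.disjSum (Y.disjSum B) : Finset (KE m))) := by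
    intro c l hl
    rw [← vec_x q 0 c l]
    exact Submodule.subset_span ⟨_, by simpa using hl, rfl⟩
  have memy : ∀ s : Fin m → Option (Fin m), ∀ i ∈ Y, Ok i (s i) → ev (s i) ∈
      Submodule.span ℚ (vec q 0 (fun i => ev (s i)) '' (X.disjSum (Y.disjSum B) : Finset (KE m))) := by
    intro s i hi ho
    have := vec_y_zero q s i ho
    have h2 : vec q (0 : ℚ) (fun i => ev (s i)) (Sum.inr (Sum.inl i)) ∈
      Submodule.span ℚ (vec q 0 (fun i => ev (s i)) '' (X.disjSum (Y.disjSum B) : Finset (KE m))) :=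
      Submodule.subset_span ⟨_, by simpa using hi, rfl⟩
    rwa [this] at h2
  have memb : ∀ c : Fin m → Option (Fin m) → ℚ, ∀ t ∈ B, (avec t : Option (Fin m) → ℚ) ∈
      Submodule.span ℚ (vec q 0 c '' (X.disjSum (Y.disjSum B) : Finset (KE m))) := by
    intro c t ht
    exact Submodule.subset_span ⟨Sum.inr (Sum.inr t), by simpa using ht, rfl⟩
  have okn : ∀ i : Fin m, Ok i none := fun i => ⟨by simp, by simp⟩
  have hB2 : B.card ≤ 2 := by simpa using Finset.card_le_univ B
  have hZ : (Finset.insertNone Xᶜ).card = Xᶜ.card + 1 := Finset.card_insertNone _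
  have notZ : ∀ z : Option (Fin m), z ∉ Finset.insertNone Xᶜ → ∃ l ∈ X, z = some l := by
    intro z hz
    rcases z with _ | l
    · simp at hz
    · exact ⟨l, by simpa using hz, rfl⟩
  rcases Nat.lt_or_ge B.card 1 with hb | hb
  · -- neither `a` nor `b`
    have hBe : B = ∅ := Finset.card_eq_zero.1 (by omega)
    obtain ⟨s, hs, hs'⟩ := exists_match Y (Finset.insertNone Xᶜ) (by omega)
      (fun i _ => ⟨none, by simp, okn i⟩) (by
        intro i hi j hj hij
        by_contra hcon
        have bad : ∀ l ∈ Xᶜ, ¬ (Ok i (some l) ∨ Ok j (some l)) := by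
          intro l hl ho
          exact hcon ⟨none, by simp, some l, by simpa using hl, by simp, Or.inl (okn i), ho⟩
        have hle : Xᶜ.card ≤ 1 := by
          rw [Finset.card_le_one]
          intro l hl l' hl'
          by_contra hne
          rcases ok_two hm hij (z := some l) (z' := some l') (by simpa using hne) with h | h
          · exact bad l hl h
          · exact bad l' hl' h
        have hsub : ({i, j} : Finset (Fin m)) ⊆ Y := by
          intro k hk
          simp at hk
          rcases hk with rfl | rfl <;> assumption
        have hpc : ({i, j} : Finset (Fin m)).card = 2 := Finset.card_pair hij
        have h2 := Finset.card_le_card hsub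
        have hY : ({i, j} : Finset (Fin m)) = Y := Finset.eq_of_subset_of_card_le hsub (by omega)
        obtain ⟨l, hl⟩ := Finset.card_eq_one.1 (show Xᶜ.card = 1 by omega)
        have hX : X = univ.erase l := by
          rw [← compl_compl X, hl]
          ext k; simp
        have hbad := bad l (by rw [hl]; simp)
        push Not at hbad
        have o1 := not_ok hbad.1
        have o2 := not_ok hbad.2
        simp only [Option.some.injEq] at o1 o2
        rcases o1 with o1 | o1 <;> rcases o2 with o2 | o2
        · exact hij (o1.symm.trans o2)
        · apply hA j
          rw [HA, hX, ← hY, hBe, ← o2, o1, Finset.pair_comm]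
        · apply hA i
          rw [HA, hX, ← hY, hBe, ← o1, o2]
        · exact hij (nx_inj (o1.symm.trans o2)))
    refine ⟨fun i => ev (s i), top_le_of_ev fun z => ?_⟩
    by_cases hz : z ∈ Finset.insertNone Xᶜ
    · have him : Y.image s = Finset.insertNone Xᶜ := by
        apply Finset.eq_of_subset_of_card_le
        · intro z hz
          obtain ⟨i, hi, rfl⟩ := Finset.mem_image.1 hz
          exact (hs' i hi).1
        · rw [Finset.card_image_of_injOn hs]
          omega
      rw [← him] at hz
      obtain ⟨i, hi, rfl⟩ := Finset.mem_image.1 hz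
      exact memy s i hi (hs' i hi).2
    · obtain ⟨l, hl, rfl⟩ := notZ z hz
      exact memx _ l hl
  rcases Nat.lt_or_ge B.card 2 with hb' | hb'
  · -- exactly one of `a`, `b`
    obtain ⟨t, ht⟩ := Finset.card_pos.1 (show 0 < B.card by omega)
    obtain ⟨s, hs, hs'⟩ := exists_match Y (Finset.insertNone Xᶜ) (by omega)
      (fun i _ => ⟨none, by simp, okn i⟩) (by
        intro i hi j hj hij
        have h2 : 1 < Y.card := Finset.one_lt_card.2 ⟨i, hi, j, hj, hij⟩
        obtain ⟨l, hl, l', hl', hne⟩ := Finset.one_lt_card.1 (show 1 < Xᶜ.card by omega)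
        rcases ok_two hm hij (z := some l) (z' := some l') (by simpa using hne) with h | h
        · exact ⟨none, by simp, some l, by simpa using hl, by simp, Or.inl (okn i), h⟩
        · exact ⟨none, by simp, some l', by simpa using hl', by simp, Or.inl (okn i), h⟩)
    have him : Y.image s ⊆ Finset.insertNone Xᶜ := by
      intro z hz
      obtain ⟨i, hi, rfl⟩ := Finset.mem_image.1 hz
      exact (hs' i hi).1
    have hc : (Finset.insertNone Xᶜ \ Y.image s).card = 1 := by
      rw [Finset.card_sdiff_of_subset him, Finset.card_image_of_injOn hs]
      omega
    obtain ⟨z0, hz0⟩ := Finset.card_eq_one.1 hc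
    refine ⟨fun i => ev (s i), top_le_of_ev_ne z0 (fun z hz => ?_) (memb _ t ht) (avec_ne t z0)⟩
    by_cases hzZ : z ∈ Finset.insertNone Xᶜ
    · have : z ∈ Y.image s := by
        by_contra hcon
        have : z ∈ Finset.insertNone Xᶜ \ Y.image s := Finset.mem_sdiff.2 ⟨hzZ, hcon⟩
        rw [hz0, Finset.mem_singleton] at this
        exact hz this
      obtain ⟨i, hi, rfl⟩ := Finset.mem_image.1 this
      exact memy s i hi (hs' i hi).2
    · obtain ⟨l, hl, rfl⟩ := notZ z hzZ
      exact memx _ l hl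
  · -- both `a` and `b`
    have hBu : B = univ := (Finset.card_eq_iff_eq_univ B).1 (by simp; omega)
    obtain ⟨s, hs, hs'⟩ := exists_match Y (Xᶜ.map Function.Embedding.some) (by omega)
      (by
        intro i hi
        by_contra! hcon
        have hY1 : 0 < Y.card := Finset.card_pos.2 ⟨i, hi⟩
        have hsub : Xᶜ ⊆ {i, nx i} := by
          intro l hl
          have := not_ok (hcon (some l) (by simpa using hl))
          simpa using this
        have hpc : ({i, nx i} : Finset (Fin m)).card = 2 := Finset.card_pair (nx_ne hm i).symm
        have h2 := Finset.card_le_card hsub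
        have hXe : Xᶜ = {i, nx i} := Finset.eq_of_subset_of_card_le hsub (by omega)
        obtain ⟨k, hk⟩ := Finset.card_eq_one.1 (show Y.card = 1 by omega)
        have hki : i = k := by rw [hk] at hi; simpa using hi
        apply hB i
        have hX : X = (univ.erase i).erase (nx i) := by
          rw [← compl_compl X, hXe]
          ext k; simp; tauto
        rw [HB, hX, hk, hki, hBu])
      (by
        intro i hi j hj hij
        have h2 : 1 < Y.card := Finset.one_lt_card.2 ⟨i, hi, j, hj, hij⟩
        obtain ⟨l1, l2, l3, m1, m2, m3, n12, n13, n23⟩ :=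
          Finset.two_lt_card_iff.1 (show 2 < Xᶜ.card by omega)
        have p1 : (some l1 : Option (Fin m)) ∈ Xᶜ.map Function.Embedding.some := by simpa using m1
        have p2 : (some l2 : Option (Fin m)) ∈ Xᶜ.map Function.Embedding.some := by simpa using m2
        have p3 : (some l3 : Option (Fin m)) ∈ Xᶜ.map Function.Embedding.some := by simpa using m3
        have d12 : (some l1 : Option (Fin m)) ≠ some l2 := by simpa using n12
        have d13 : (some l1 : Option (Fin m)) ≠ some l3 := by simpa using n13
        have d23 : (some l2 : Option (Fin m)) ≠ some l3 := by simpa using n23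
        rcases ok_two hm hij d12 with h | h
        · rcases ok_two hm hij d23 with h' | h'
          · exact ⟨_, p1, _, p2, d12, h, h'⟩
          · exact ⟨_, p1, _, p3, d13, h, h'⟩
        · rcases ok_two hm hij d13 with h' | h'
          · exact ⟨_, p2, _, p1, d12.symm, h, h'⟩
          · exact ⟨_, p2, _, p3, d23, h, h'⟩)
    have him : Y.image s ⊆ Xᶜ.map Function.Embedding.some := by
      intro z hz
      obtain ⟨i, hi, rfl⟩ := Finset.mem_image.1 hz
      exact (hs' i hi).1
    have hc : (Xᶜ.map Function.Embedding.some \ Y.image s).card = 1 := by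
      rw [Finset.card_sdiff_of_subset him, Finset.card_image_of_injOn hs]
      omega
    obtain ⟨z0, hz0⟩ := Finset.card_eq_one.1 hc
    refine ⟨fun i => ev (s i), top_le_of_ev_ne z0 (fun z hz => ?_)
      (memb _ true (by simp [hBu])) (avec_ne true z0)⟩
    by_cases hzZ : z ∈ Xᶜ.map Function.Embedding.some
    · have : z ∈ Y.image s := by
        by_contra hcon
        have : z ∈ Xᶜ.map Function.Embedding.some \ Y.image s := Finset.mem_sdiff.2 ⟨hzZ, hcon⟩
        rw [hz0, Finset.mem_singleton] at this
        exact hz this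
      obtain ⟨i, hi, rfl⟩ := Finset.mem_image.1 this
      exact memy s i hi (hs' i hi).2
    · rcases z with _ | l
      · rw [← avec_sub]
        exact Submodule.sub_mem _ (memb _ true (by simp [hBu])) (memb _ false (by simp [hBu]))
      · exact memx _ l (by simpa using hzZ)

lemma spec_HB_zero (hm : 4 ≤ m) (q : ℕ) (hq : 1 ≤ q) (i : Fin m) (hi : i.1 = 0) :
    ⊤ ≤ Submodule.span ℚ (vec q 1 (fun _ => ev none) '' (HB i : Set (KE m))) := by
  set U := Submodule.span ℚ (vec q (1 : ℚ) (fun _ => ev none) '' (HB i : Set (KE m))) with hU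
  have hb : ∀ t, (avec t : Option (Fin m) → ℚ) ∈ U := fun t =>
    Submodule.subset_span ⟨Sum.inr (Sum.inr t), by simp [HB], rfl⟩
  have hn : ev none ∈ U := by
    rw [← avec_sub]
    exact Submodule.sub_mem _ (hb _) (hb _)
  have hy : vec q (1 : ℚ) (fun _ => ev none) (Sum.inr (Sum.inl i)) = ev none + ev (some (nx i)) := by
    have hne := nx_ne hm i
    have h1 : al q i (1 : ℚ) = 0 := by simp [al, hi]
    have h2 : be q i (1 : ℚ) = 1 := by simp [be, hi, hq]
    funext z
    rcases z with _ | l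
    · simp [vec, yvec, ev]
    · simp only [vec, yvec, h1, h2]
      split_ifs with h3 h4
      · subst h3
        simp [ev, Pi.single_apply, hne.symm]
      · subst h4
        simp [ev]
      · simp [ev, Pi.single_apply, h4]
  have hn1 : ev (some (nx i)) ∈ U := by
    have h2 : vec q (1 : ℚ) (fun _ => ev none) (Sum.inr (Sum.inl i)) ∈ U :=
      Submodule.subset_span ⟨Sum.inr (Sum.inl i), by simp [HB], rfl⟩
    rw [hy] at h2
    exact (Submodule.add_mem_iff_right _ hn).1 h2
  refine top_le_of_ev_ne (some i) (fun z hz => ?_) (hb true) (avec_ne _ _)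
  rcases z with _ | l
  · exact hn
  · by_cases hl : l = nx i
    · rw [hl]; exact hn1
    · rw [← vec_x q 1 (fun _ => ev none) l]
      refine Submodule.subset_span ⟨_, ?_, rfl⟩
      have : l ≠ i := fun h => hz (by rw [h])
      simp [HB, hl, this]

lemma isUnit_det_iff (w : Option (Fin m) → Option (Fin m) → ℚ) :
    (Matrix.of w).det ≠ 0 ↔ LinearIndependent ℚ w := by
  rw [← isUnit_iff_ne_zero, ← Matrix.isUnit_iff_isUnit_det, ← Matrix.linearIndependent_rows_iff_isUnit]
  rfl

lemma exists_params (hm : 4 ≤ m) (q : ℕ) (hq : 1 ≤ q) :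
    ∃ (e : ℚ) (c : Fin m → Option (Fin m) → ℚ), ∀ S : Finset (KE m), S.card = m + 1 →
      (∀ j, S ≠ KH j) → LinearIndependent ℚ (fun x : S => vec q e c x) := by
  classical
  set P : (Option (Fin m) → KE m) → MvPolynomial (Option (Fin m × Option (Fin m))) ℚ := fun f =>
    (Matrix.of fun r z => vec q (MvPolynomial.X none) (fun i z => MvPolynomial.X (some (i, z)))
      (f r) z).det with hP
  have hev : ∀ t f, MvPolynomial.eval t (P f) =
      (Matrix.of fun r => vec q (t none) (fun i z => t (some (i, z))) (f r)).det := by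
    intro t f
    rw [hP]
    simp only
    rw [RingHom.map_det]
    congr 1
    ext r z
    simp [map_vec]
  obtain ⟨t, ht⟩ := exists_good_point
    (univ.filter fun f : Option (Fin m) → KE m => Function.Injective f ∧
      ∀ j, univ.image f ≠ KH j) P (by
    intro f hf
    obtain ⟨hinj, hne⟩ := (Finset.mem_filter.1 hf).2
    suffices hs : ∃ (e : ℚ) (c : Fin m → Option (Fin m) → ℚ),
        ⊤ ≤ Submodule.span ℚ (vec q e c '' (univ.image f : Finset (KE m))) by
      obtain ⟨e, c, hs⟩ := hs
      refine ⟨fun o => o.elim e (fun p => c p.1 p.2), ?_⟩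
      rw [hev, isUnit_det_iff]
      apply linearIndependent_of_top_le_span_of_card_eq_finrank
      · refine hs.trans (Submodule.span_mono ?_)
        rintro _ ⟨x, hx, rfl⟩
        obtain ⟨r, -, rfl⟩ := Finset.mem_image.1 (Finset.mem_coe.1 hx)
        exact ⟨r, rfl⟩
      · simp
    have hcard : (univ.image f).card = m + 1 := by
      rw [Finset.card_image_of_injective _ hinj]
      simp
    generalize univ.image f = S at hne hcard ⊢
    by_cases h0 : ∃ i : Fin m, i.1 = 0 ∧ S = HB i
    · obtain ⟨i, hi, rfl⟩ := h0
      exact ⟨1, _, spec_HB_zero hm q hq i hi⟩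
    · have hS : S.toLeft.disjSum (S.toRight.toLeft.disjSum S.toRight.toRight) = S := by
        rw [Finset.toLeft_disjSum_toRight, Finset.toLeft_disjSum_toRight]
      have := exists_spec hm q S.toLeft S.toRight.toLeft S.toRight.toRight (by
        rw [Finset.card_toLeft_add_card_toRight, Finset.card_toLeft_add_card_toRight, hcard])
        (by rw [hS]; exact fun i => hne (Sum.inl i))
        (by
          rw [hS]
          intro i h
          by_cases hi : i.1 = 0
          · exact h0 ⟨i, hi, h⟩
          · exact hne (Sum.inr ⟨i, hi⟩) h)
      rw [hS] at this
      exact ⟨0, this⟩)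
  refine ⟨t none, fun i z => t (some (i, z)), ?_⟩
  intro S hS hne
  have eqv : Option (Fin m) ≃ S := Fintype.equivOfCardEq (by simp [hS])
  have h1 := ht (fun r => (eqv r : KE m)) (by
    rw [Finset.mem_filter]
    refine ⟨mem_univ _, fun a b h => eqv.injective (Subtype.ext h), ?_⟩
    intro j h
    apply hne j
    rw [← h]
    ext x
    simp only [Finset.mem_image, mem_univ, true_and]
    constructor
    · intro hx
      exact ⟨eqv.symm ⟨x, hx⟩, by simp⟩
    · rintro ⟨r, rfl⟩
      exact (eqv r).2)
  rw [hev, isUnit_det_iff] at h1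
  exact (linearIndependent_equiv eqv (f := fun x : S =>
    vec q (t none) (fun i z => t (some (i, z))) (x : KE m))).1 h1

lemma dm_lt_of_functional (φ : (Option (Fin m) → ℚ) →ₗ[ℚ] ℚ) (T : Set (Option (Fin m) → ℚ))
    (h : ∀ w ∈ T, φ w = 0) (hφ : φ ≠ 0) : dm (Submodule.span ℚ T) < m + 1 := by
  have hle : Submodule.span ℚ T ≤ LinearMap.ker φ := Submodule.span_le.2 fun w hw => h w hw
  have hlt : Submodule.span ℚ T < ⊤ := lt_of_le_of_lt hle
    (lt_top_iff_ne_top.2 fun h => hφ (LinearMap.ker_eq_top.1 h))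
  have := Submodule.finrank_lt hlt.ne
  simpa [dm] using this

lemma dep_HA (hm : 4 ≤ m) (q : ℕ) (hq : q < 2 * m) (e : ℚ) (c : Fin m → Option (Fin m) → ℚ)
    (i : Fin m) (hi : 2 * i.1 + 1 ≠ q) :
    dm (Submodule.span ℚ (vec q e c '' (HA i : Set (KE m)))) < m + 1 := by
  have hi2 := i.2
  have hne := nx_ne hm i
  have hab : al q (nx i) e = be q i e := by
    have hv := nx_val i
    unfold al be
    by_cases h : i.1 + 1 = m
    · rw [if_pos h] at hv
      rw [if_neg (by omega), if_neg (by omega)]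
    · rw [if_neg h] at hv
      congr 1
      apply propext
      omega
  apply dm_lt_of_functional (LinearMap.proj (some (nx i)) - be q i e • LinearMap.proj none)
  · rintro _ ⟨x, hx, rfl⟩
    rcases x with l | l | t
    · have hl : l ≠ nx i := by simpa [HA] using hx
      simp [vec, hl.symm]
    · have hl : l = i ∨ l = nx i := by simpa [HA] using hx
      rcases hl with rfl | rfl
      · simp [vec, yvec, hne, mul_comm]
      · simp [vec, yvec, hab, mul_comm]
    · simp [HA] at hx
  · intro h
    have := LinearMap.congr_fun h (ev (some (nx i)))
    simp [ev] at this

lemma dep_HB (hm : 4 ≤ m) (q : ℕ) (e : ℚ) (c : Fin m → Option (Fin m) → ℚ)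
    (i : Fin m) (hi0 : i.1 ≠ 0) (hi : 2 * i.1 ≠ q) :
    dm (Submodule.span ℚ (vec q e c '' (HB i : Set (KE m)))) < m + 1 := by
  have hne := nx_ne hm i
  have hab : al q i e = be q i e := by
    unfold al be
    congr 1
    apply propext
    omega
  apply dm_lt_of_functional ((LinearMap.proj (some i) : (Option (Fin m) → ℚ) →ₗ[ℚ] ℚ) -
    LinearMap.proj (some (nx i)))
  · rintro _ ⟨x, hx, rfl⟩
    rcases x with l | l | t
    · have hl : l ≠ nx i ∧ l ≠ i := by simpa [HB] using hx
      simp [vec, hl.1.symm, hl.2.symm]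
    · have hl : l = i := by simpa [HB] using hx
      subst hl
      simp [vec, yvec, hne, hab]
    · simp [vec, avec]
  · intro h
    have := LinearMap.congr_fun h (ev (some i))
    simp [ev, hne] at this

lemma exists_realises (hm : 4 ≤ m) (j : KJ m) :
    ∃ v : KE m → Option (Fin m) → ℚ, Realises (m + 1) KH j v := by
  obtain ⟨q, hq1, hq2, hA, hB⟩ : ∃ q, 1 ≤ q ∧ q < 2 * m ∧
      (∀ i : Fin m, Sum.inl i ≠ j → 2 * i.1 + 1 ≠ q) ∧
      (∀ i : {i : Fin m // i.1 ≠ 0}, Sum.inr i ≠ j → 2 * i.1.1 ≠ q) := by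
    rcases j with k | k
    · have hk := k.2
      refine ⟨2 * k.1 + 1, by omega, by omega, ?_, ?_⟩
      · intro i hi h
        apply hi
        rw [Sum.inl.injEq]
        apply Fin.ext
        omega
      · intro i _ h
        omega
    · have hk := k.1.2
      have hk0 := k.2
      refine ⟨2 * k.1.1, by omega, by omega, ?_, ?_⟩
      · intro i _ h
        omega
      · intro i hi h
        apply hi
        rw [Sum.inr.injEq]
        apply Subtype.ext
        apply Fin.ext
        omega
  obtain ⟨e, c, h⟩ := exists_params hm q hq1
  refine ⟨vec q e c, h, ?_⟩
  rintro (i | i) hij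
  · exact dep_HA hm q hq2 e c i (hA i hij)
  · exact dep_HB hm q e c i.1 i.2 (hB i hij)

lemma card_KJ : 2 * m - 1 ≤ Fintype.card (KJ m) := by
  have h2 : Fintype.card {i : Fin m // i.1 = 0} ≤ 1 :=
    Fintype.card_le_one_iff.2 fun a b => Subtype.ext (Fin.ext (a.2.trans b.2.symm))
  have h1 := Fintype.card_subtype_compl (fun i : Fin m => i.1 = 0)
  simp only [Fintype.card_sum, Fintype.card_fin, ne_eq] at h1 ⊢
  omega

lemma main (hm : 4 ≤ m) :
    ∃ (α : Type) (M : Matroid α), M.Finite ∧ M.MemKinserClass m ∧ ¬ M.MemKinserClass (m + 1) := by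
  have hJ := card_KJ (m := m)
  refine ⟨KE m, spM (sparseFam_KH hm), spM_finite _, ?_, not_kinser hm⟩
  refine memKinserClass_of_realises (V := Option (Fin m) → ℚ) (sparseFam_KH hm) ?_ ?_
    (exists_realises hm) m hm (by omega)
  · simp only [Fintype.card_sum, Fintype.card_fin, Fintype.card_bool]
    omega
  · simp

end Concrete

end KinserAux
/-- For every `n ≥ 5` the containment `K n ⊆ K (n-1)` is proper: there is a finite matroid
in `K (n-1)` that is not in `K n`. -/
theorem Matroid.exists_memKinserClass_pred_not_memKinserClass {n : ℕ} (hn : 5 ≤ n) :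
    ∃ (α : Type) (M : Matroid α), M.Finite ∧ M.MemKinserClass (n - 1) ∧
      ¬ M.MemKinserClass n := by
  obtain ⟨m, rfl⟩ : ∃ m, n = m + 1 := ⟨n - 1, by omega⟩
  exact KinserAux.main (by omega)
end

section
/- Let M be a finite matroid satisfying the 4th Kinser (Ingleton) inequality for every family of four subsets of its ground set. Then the dual matroid M* also satisfies the 4th Kinser inequality for every family of four subsets of its ground set. Consequently K_4 = K_4*, i.e. the class K_4 is closed under duality. -/
open Finset

universe u v

namespace Matroid

section helpers

variable {α : Type*} (M : Matroid α) [M.Finite]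

lemma rnk_cast (X : Set α) : (M.rnk X : ℕ∞) = M.eRk X := by
  obtain ⟨I, hI⟩ := M.exists_isBasis' X
  have hfin : I.Finite := hI.indep.finite
  rw [← hI.encard_eq_eRk, ← hfin.cast_ncard_eq]
  congr 1
  apply IsGreatest.csSup_eq
  refine ⟨⟨I, hI.indep, hI.subset, rfl⟩, ?_⟩
  rintro n ⟨J, hJ, hJX, rfl⟩
  have h : J.encard ≤ I.encard := by
    rw [hI.encard_eq_eRk]
    exact hJ.encard_le_eRk_of_subset hJX
  rw [← hfin.cast_ncard_eq, ← hJ.finite.cast_ncard_eq] at h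
  exact_mod_cast h

lemma rnk_mono {X Y : Set α} (h : X ⊆ Y) : M.rnk X ≤ M.rnk Y := by
  have := M.eRk_mono h
  rw [← rnk_cast, ← rnk_cast] at this
  exact_mod_cast this

lemma rnk_submod (C A B : Set α) {U : Set α} (hA : C ⊆ A) (hB : C ⊆ B) (hU : U ⊆ A ∪ B) :
    M.rnk U + M.rnk C ≤ M.rnk A + M.rnk B := by
  have := M.eRk_inter_add_eRk_union_le A B
  simp only [← rnk_cast] at this
  have h : M.rnk (A ∩ B) + M.rnk (A ∪ B) ≤ M.rnk A + M.rnk B := by exact_mod_cast this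
  have h1 := M.rnk_mono hU
  have h2 := M.rnk_mono (Set.subset_inter hA hB)
  omega

lemma rnk_union_card (A B : Set α) {U : Set α} (hB : B ⊆ M.E) (hU : U ⊆ A ∪ B) :
    M.rnk U ≤ M.rnk A + B.ncard := by
  have h := M.eRk_union_le_eRk_add_eRk A B
  have h2 := M.eRk_le_encard B
  rw [← (M.ground_finite.subset hB).cast_ncard_eq] at h2
  simp only [← rnk_cast] at h h2
  have h : M.rnk (A ∪ B) ≤ M.rnk A + M.rnk B := by exact_mod_cast h
  have h2 : M.rnk B ≤ B.ncard := by exact_mod_cast h2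
  have h1 := M.rnk_mono hU
  omega

lemma rnk_dual (X : Set α) (hX : X ⊆ M.E) :
    M✶.rnk X + M.rnk M.E = M.rnk (M.E \ X) + X.ncard := by
  have h := M.eRk_dual_add_eRank X hX
  rw [← M.eRk_ground, ← (M.ground_finite.subset hX).cast_ncard_eq] at h
  simp only [← rnk_cast] at h
  exact_mod_cast h

open Classical in
lemma ncard_eq_sum (X : Set α) (hX : X ⊆ M.E) :
    X.ncard = ∑ x ∈ M.ground_finite.toFinset, if x ∈ X then 1 else 0 := by
  rw [Finset.sum_boole, ← Set.ncard_coe_finset]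
  simp only [Nat.cast_id]
  congr 1
  ext x
  simp only [Finset.coe_filter, Set.Finite.mem_toFinset, Set.mem_setOf_eq]
  exact ⟨fun h => ⟨hX h, h⟩, fun h => h.2⟩

lemma card_ineq {A B C D : Set α} (hA : A ⊆ M.E) (hB : B ⊆ M.E) (hC : C ⊆ M.E) (hD : D ⊆ M.E) :
    C.ncard + D.ncard + (A ∪ B).ncard + (A ∪ C ∪ D).ncard + (B ∪ C ∪ D).ncard
      + ((A ∩ B) \ (C ∪ D)).ncard + ((C ∩ D) \ (A ∪ B)).ncard
      + ((A ∩ B ∩ C) \ D).ncard + ((A ∩ B ∩ D) \ C).ncard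
    ≤ (A ∪ C).ncard + (A ∪ D).ncard + (B ∪ C).ncard + (B ∪ D).ncard + (C ∪ D).ncard := by
  classical
  rw [M.ncard_eq_sum C (by grind), M.ncard_eq_sum D (by grind), M.ncard_eq_sum (A ∪ B) (by grind),
    M.ncard_eq_sum (A ∪ C ∪ D) (by grind), M.ncard_eq_sum (B ∪ C ∪ D) (by grind),
    M.ncard_eq_sum ((A ∩ B) \ (C ∪ D)) (by grind), M.ncard_eq_sum ((C ∩ D) \ (A ∪ B)) (by grind),
    M.ncard_eq_sum ((A ∩ B ∩ C) \ D) (by grind), M.ncard_eq_sum ((A ∩ B ∩ D) \ C) (by grind),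
    M.ncard_eq_sum (A ∪ C) (by grind), M.ncard_eq_sum (A ∪ D) (by grind),
    M.ncard_eq_sum (B ∪ C) (by grind), M.ncard_eq_sum (B ∪ D) (by grind),
    M.ncard_eq_sum (C ∪ D) (by grind)]
  simp only [← Finset.sum_add_distrib]
  apply Finset.sum_le_sum
  intro x _
  by_cases h1 : x ∈ A <;> by_cases h2 : x ∈ B <;> by_cases h3 : x ∈ C <;> by_cases h4 : x ∈ D <;>
    simp [h1, h2, h3, h4]

lemma kinserIneq_four_iff (X : ℕ → Set α) :
    M.KinserIneq 4 X ↔ M.IngletonIneq (X 1) (X 2) (X 3) (X 4) := by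
  have h : Finset.Icc 3 4 = ({3, 4} : Finset ℕ) := by decide
  simp [KinserIneq, IngletonIneq, h]
  omega

lemma ingleton_dual (hM : ∀ A B C D, A ⊆ M.E → B ⊆ M.E → C ⊆ M.E → D ⊆ M.E →
      M.IngletonIneq A B C D)
    {A B C D : Set α} (hA : A ⊆ M.E) (hB : B ⊆ M.E) (hC : C ⊆ M.E) (hD : D ⊆ M.E) :
    M✶.IngletonIneq A B C D := by
  have hcard := M.card_ineq hA hB hC hD
  have d1 := M.rnk_dual C hC
  have d2 := M.rnk_dual D hD
  have d3 := M.rnk_dual (A ∪ B) (by grind)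
  have d4 := M.rnk_dual (A ∪ C ∪ D) (by grind)
  have d5 := M.rnk_dual (B ∪ C ∪ D) (by grind)
  have d6 := M.rnk_dual (A ∪ C) (by grind)
  have d7 := M.rnk_dual (A ∪ D) (by grind)
  have d8 := M.rnk_dual (B ∪ C) (by grind)
  have d9 := M.rnk_dual (B ∪ D) (by grind)
  have d10 := M.rnk_dual (C ∪ D) (by grind)
  -- the sets `E \ (union of three)`
  set a := M.E \ (B ∪ C ∪ D) with ha
  set b := M.E \ (A ∪ C ∪ D) with hb
  set c := M.E \ (A ∪ B ∪ D) with hc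
  set d := M.E \ (A ∪ B ∪ C) with hd
  have key := hM c d a b (by grind) (by grind) (by grind) (by grind)
  unfold IngletonIneq at key ⊢
  -- `E \ (A ∪ B)`
  have e1 := M.rnk_union_card (c ∪ d) ((C ∩ D) \ (A ∪ B)) (U := M.E \ (A ∪ B))
    (by grind) (by grind)
  -- `E \ D`
  have f1 := M.rnk_submod (c ∪ a) (c ∪ a ∪ b) (M.E \ (B ∪ D))
    (U := c ∪ a ∪ b ∪ (M.E \ (B ∪ D))) (by grind) (by grind) (by grind)
  have f2 := M.rnk_submod (c ∪ b) (c ∪ a ∪ b ∪ (M.E \ (B ∪ D))) (M.E \ (A ∪ D))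
    (U := c ∪ a ∪ b ∪ (M.E \ (B ∪ D)) ∪ (M.E \ (A ∪ D))) (by grind) (by grind) (by grind)
  have f3 := M.rnk_submod (a ∪ b) (c ∪ a ∪ b ∪ (M.E \ (B ∪ D)) ∪ (M.E \ (A ∪ D)))
    (M.E \ (C ∪ D))
    (U := c ∪ a ∪ b ∪ (M.E \ (B ∪ D)) ∪ (M.E \ (A ∪ D)) ∪ (M.E \ (C ∪ D)))
    (by grind) (by grind) (by grind)
  have f4 := M.rnk_union_card
    (c ∪ a ∪ b ∪ (M.E \ (B ∪ D)) ∪ (M.E \ (A ∪ D)) ∪ (M.E \ (C ∪ D)))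
    ((A ∩ B ∩ C) \ D) (U := M.E \ D) (by grind) (by grind)
  -- `E \ C`
  have g1 := M.rnk_submod (d ∪ a) (d ∪ a ∪ b) (M.E \ (B ∪ C))
    (U := d ∪ a ∪ b ∪ (M.E \ (B ∪ C))) (by grind) (by grind) (by grind)
  have g2 := M.rnk_submod (d ∪ b) (d ∪ a ∪ b ∪ (M.E \ (B ∪ C))) (M.E \ (A ∪ C))
    (U := d ∪ a ∪ b ∪ (M.E \ (B ∪ C)) ∪ (M.E \ (A ∪ C))) (by grind) (by grind) (by grind)
  have g3 := M.rnk_union_card (d ∪ a ∪ b ∪ (M.E \ (B ∪ C)) ∪ (M.E \ (A ∪ C)))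
    ((A ∩ B) \ (C ∪ D))
    (U := d ∪ a ∪ b ∪ (M.E \ (B ∪ C)) ∪ (M.E \ (A ∪ C)) ∪ ((A ∩ B) \ (C ∪ D)))
    (by grind) (by grind)
  have g4 := M.rnk_union_card
    (d ∪ a ∪ b ∪ (M.E \ (B ∪ C)) ∪ (M.E \ (A ∪ C)) ∪ ((A ∩ B) \ (C ∪ D)))
    ((A ∩ B ∩ D) \ C) (U := M.E \ C) (by grind) (by grind)
  omega

end helpers

end Matroid

/-- `K 4 = K 4✶` : the class of matroids satisfying the 4th Kinser (Ingleton) inequality is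
closed under duality. -/
theorem Matroid.dual_memKinserClass_four {α : Type*} (M : Matroid α) [M.Finite]
    (hM : M.MemKinserClass 4) : M✶.MemKinserClass 4 := by
  have hM' : ∀ A B C D, A ⊆ M.E → B ⊆ M.E → C ⊆ M.E → D ⊆ M.E →
      M.IngletonIneq A B C D := by
    intro A B C D hA hB hC hD
    have h := (M.kinserIneq_four_iff _).1
      (hM (fun i => if i = 1 then A else if i = 2 then B else if i = 3 then C else D)
        (by intro i _; split_ifs <;> assumption))
    simpa using h
  intro X hX
  rw [kinserIneq_four_iff]
  exact M.ingleton_dual hM' (hX 1 (by decide)) (hX 2 (by decide)) (hX 3 (by decide))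
    (hX 4 (by decide))
end

section
/- There exists a finite matroid M such that M satisfies the 5th Kinser inequality for every family of five subsets of its ground set, but the dual matroid M* violates the 5th Kinser inequality for some family of five subsets of its ground set. Consequently K_5 ≠ K_5*, i.e. the Kinser class K_5 is not closed under duality. -/
open Finset

universe u v

namespace KinserFive
set_option linter.unusedSectionVars false

/-! ### Sparse paving matroids of rank 5 -/

section Paving

variable {α : Type} [Fintype α] [DecidableEq α]

/-- `𝓒` is a legal collection of circuit-hyperplanes of a rank 5 sparse paving matroid. -/
structure Sparse (𝓒 : Finset (Finset α)) : Prop where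
  card_eq : ∀ C ∈ 𝓒, C.card = 5
  inter_le : ∀ C ∈ 𝓒, ∀ D ∈ 𝓒, C ≠ D → (C ∩ D).card ≤ 3

/-- Rank function of the sparse paving matroid. -/
def rr (𝓒 : Finset (Finset α)) (X : Finset α) : ℕ := if X ∈ 𝓒 then 4 else min X.card 5

/-- The sparse paving matroid of rank 5 with circuit-hyperplanes `𝓒`. -/
def spm (𝓒 : Finset (Finset α)) (h : Sparse 𝓒) : Matroid α :=
  (IndepMatroid.ofFinset (E := Set.univ) (Indep := fun I => I.card ≤ 5 ∧ I ∉ 𝓒)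
    (by
      refine ⟨by simp, fun hh => ?_⟩
      have := h.card_eq _ hh
      simp at this)
    (by
      intro I J hJ hIJ
      have hc := card_le_card hIJ
      refine ⟨hc.trans hJ.1, fun hI => ?_⟩
      have := h.card_eq _ hI
      have e : I = J := eq_of_subset_of_card_le hIJ (by omega)
      exact hJ.2 (e ▸ hI))
    (by
      intro I J hI hJ hlt
      by_contra hcon
      push Not at hcon
      have key : ∀ e ∈ J, e ∉ I → insert e I ∈ 𝓒 := by
        intro e he heI
        have h1 := hcon e he heI
        have h2 := card_insert_of_notMem heI
        exact h1 (by omega)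
      obtain ⟨e, he, heI⟩ : ∃ e ∈ J, e ∉ I := by
        by_contra hh
        push Not at hh
        have := card_le_card (show J ⊆ I from hh)
        omega
      have hC := key e he heI
      have hC5 := h.card_eq _ hC
      rw [card_insert_of_notMem heI] at hC5
      by_cases hsub : J ⊆ insert e I
      · have : J = insert e I := eq_of_subset_of_card_le hsub (by
          rw [card_insert_of_notMem heI]; omega)
        exact hJ.2 (this ▸ hC)
      · obtain ⟨f, hf, hfI⟩ := not_subset.1 hsub
        have hfI' : f ∉ I := fun hh => hfI (mem_insert_of_mem hh)
        have hD := key f hf hfI'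
        have hne : insert e I ≠ insert f I := fun hh => hfI (hh ▸ mem_insert_self f I)
        have h3 := h.inter_le _ hC _ hD hne
        have h4 : I ⊆ insert e I ∩ insert f I :=
          subset_inter (subset_insert _ _) (subset_insert _ _)
        have := card_le_card h4
        omega)
    (by simp)).matroid

theorem spm_indep (𝓒 : Finset (Finset α)) (h : Sparse 𝓒) (I : Finset α) :
    (spm 𝓒 h).Indep (I : Set α) ↔ I.card ≤ 5 ∧ I ∉ 𝓒 := by
  simp [spm]

theorem spm_E (𝓒 : Finset (Finset α)) (h : Sparse 𝓒) : (spm 𝓒 h).E = Set.univ := rfl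

theorem spm_rnk (𝓒 : Finset (Finset α)) (h : Sparse 𝓒) (X : Finset α) :
    (spm 𝓒 h).rnk (X : Set α) = rr 𝓒 X := by
  unfold Matroid.rnk
  apply IsGreatest.csSup_eq
  constructor
  · by_cases hX : X ∈ 𝓒
    · have h5 := h.card_eq _ hX
      obtain ⟨I, hI, hIc⟩ := exists_subset_card_eq (s := X) (n := 4) (by omega)
      refine ⟨I, (spm_indep 𝓒 h I).2 ⟨by omega, fun hh => ?_⟩, by exact_mod_cast hI, ?_⟩
      · have := h.card_eq _ hh
        omega
      · simp [rr, hX, hIc]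
    · by_cases h5 : X.card ≤ 5
      · exact ⟨X, (spm_indep 𝓒 h X).2 ⟨h5, hX⟩, subset_rfl, by simp [rr, hX, h5]⟩
      · obtain ⟨I, hI, hIc⟩ := exists_subset_card_eq (s := X) (n := 6) (by omega)
        have hr : rr 𝓒 X = 5 := by simp [rr, hX]; omega
        have hne : I.Nonempty := card_pos.1 (by omega)
        obtain ⟨e, he⟩ := hne
        have hex : ∃ J ⊆ I, J.card = 5 ∧ J ∉ 𝓒 := by
          by_contra hcon
          push Not at hcon
          obtain ⟨f, hf, hfe⟩ := exists_mem_ne (s := I) (by omega) e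
          have c1 := card_erase_of_mem he
          have c2 := card_erase_of_mem hf
          have m1 := hcon (I.erase e) (erase_subset _ _) (by omega)
          have m2 := hcon (I.erase f) (erase_subset _ _) (by omega)
          have hne : I.erase e ≠ I.erase f := by
            intro hh
            have : f ∈ I.erase e := mem_erase.2 ⟨hfe, hf⟩
            rw [hh] at this
            simp at this
          have h3 := h.inter_le _ m1 _ m2 hne
          have h4 := card_union_add_card_inter (I.erase e) (I.erase f)
          have h5 := card_le_card (union_subset (erase_subset e I) (erase_subset f I))
          omega
        obtain ⟨J, hJ, hJ5, hJC⟩ := hex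
        refine ⟨J, (spm_indep 𝓒 h J).2 ⟨by omega, hJC⟩, ?_, by simp [hJ5, hr]⟩
        exact_mod_cast hJ.trans hI
  · rintro n ⟨I, hI, hIX, rfl⟩
    lift I to Finset α using I.toFinite
    rw [spm_indep] at hI
    have hIX' : I ⊆ X := by exact_mod_cast hIX
    have := card_le_card hIX'
    rw [Set.ncard_coe_finset]
    unfold rr
    split_ifs with hX
    · have h5 := h.card_eq _ hX
      by_contra hcon
      have : I = X := eq_of_subset_of_card_le hIX' (by omega)
      exact hI.2 (this ▸ hX)
    · omega

theorem spm_isBase (𝓒 : Finset (Finset α)) (h : Sparse 𝓒) (hc : 6 ≤ Fintype.card α)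
    (B : Finset α) : (spm 𝓒 h).IsBase (B : Set α) ↔ B.card = 5 ∧ B ∉ 𝓒 := by
  have huniv : ∃ J : Finset α, J.card = 5 ∧ J ∉ 𝓒 := by
    have h0 := spm_rnk 𝓒 h univ
    have h1 : rr 𝓒 (univ : Finset α) = 5 := by
      have : (univ : Finset α) ∉ 𝓒 := fun hh => by
        have := h.card_eq _ hh
        rw [card_univ] at this
        omega
      simp [rr, this]
      omega
    by_contra hcon
    push Not at hcon
    obtain ⟨I, hI, hIc⟩ := exists_subset_card_eq (s := (univ : Finset α)) (n := 6)
      (by rw [card_univ]; omega)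
    obtain ⟨e, he⟩ : I.Nonempty := card_pos.1 (by omega)
    obtain ⟨f, hf, hfe⟩ := exists_mem_ne (s := I) (by omega) e
    have c1 := card_erase_of_mem he
    have c2 := card_erase_of_mem hf
    have m1 := hcon (I.erase e) (by omega)
    have m2 := hcon (I.erase f) (by omega)
    have hne : I.erase e ≠ I.erase f := by
      intro hh
      have : f ∈ I.erase e := mem_erase.2 ⟨hfe, hf⟩
      rw [hh] at this
      simp at this
    have h3 := h.inter_le _ m1 _ m2 hne
    have h4 := card_union_add_card_inter (I.erase e) (I.erase f)
    have h5 := card_le_card (union_subset (erase_subset e I) (erase_subset f I))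
    omega
  constructor
  · intro hB
    have hI := (spm_indep 𝓒 h B).1 hB.indep
    refine ⟨?_, hI.2⟩
    obtain ⟨J, hJ, hJC⟩ := huniv
    have hJI := (spm_indep 𝓒 h J).2 ⟨hJ.le, hJC⟩
    obtain ⟨B', hB', hJB'⟩ := hJI.exists_isBase_superset
    have := hB.ncard_eq_ncard_of_isBase hB'
    have h2 := Set.ncard_le_ncard hJB' B'.toFinite
    simp only [Set.ncard_coe_finset] at this h2
    omega
  · rintro ⟨h5, hB⟩
    have hBI := (spm_indep 𝓒 h B).2 ⟨h5.le, hB⟩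
    obtain ⟨B', hB', hBB'⟩ := hBI.exists_isBase_superset
    lift B' to Finset α using B'.toFinite
    have h1 := ((spm_indep 𝓒 h B').1 hB'.indep).1
    have : B = B' := eq_of_subset_of_card_le (by exact_mod_cast hBB') (by omega)
    rwa [this]

theorem spm_dual (𝓒 𝓓 : Finset (Finset α)) (h : Sparse 𝓒) (h' : Sparse 𝓓)
    (hc : Fintype.card α = 10) (hd : ∀ X, X ∈ 𝓓 ↔ Xᶜ ∈ 𝓒) :
    (spm 𝓒 h)✶ = spm 𝓓 h' := by
  refine Matroid.ext_isBase (by simp [spm_E]) ?_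
  intro B _
  lift B to Finset α using B.toFinite
  rw [Matroid.dual_isBase_iff (by simp [spm_E]), spm_isBase 𝓓 h' (by omega), spm_E,
    ← Set.compl_eq_univ_sdiff, ← coe_compl, spm_isBase 𝓒 h (by omega), hd, card_compl, hc]
  have := card_le_univ B
  constructor <;> rintro ⟨h1, h2⟩ <;> exact ⟨by omega, h2⟩

/-! ### Rank inequalities -/

theorem rr_le_five (𝓒 : Finset (Finset α)) (X : Finset α) : rr 𝓒 X ≤ 5 := by
  unfold rr; split_ifs <;> omega

theorem rr_le_card {𝓒 : Finset (Finset α)} (h : Sparse 𝓒) (X : Finset α) :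
    rr 𝓒 X ≤ X.card := by
  unfold rr
  split_ifs with hX
  · have := h.card_eq _ hX; omega
  · omega

theorem rr_of_card_le {𝓒 : Finset (Finset α)} (h : Sparse 𝓒) (X : Finset α)
    (hX : X.card ≤ 4) : rr 𝓒 X = X.card := by
  unfold rr
  split_ifs with hX'
  · have := h.card_eq _ hX'; omega
  · omega

theorem rr_mono {𝓒 : Finset (Finset α)} (h : Sparse 𝓒) {X Y : Finset α} (hXY : X ⊆ Y) :
    rr 𝓒 X ≤ rr 𝓒 Y := by
  have hc := card_le_card hXY
  by_cases hY : Y ∈ 𝓒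
  · have h5 := h.card_eq _ hY
    by_cases he : X = Y
    · rw [he]
    · have : X.card < Y.card := card_lt_card (hXY.ssubset_of_ne he)
      have := rr_le_card h X
      have : rr 𝓒 Y = 4 := by simp [rr, hY]
      omega
  · unfold rr
    split_ifs with hX
    · have := h.card_eq _ hX; omega
    · omega

/-- The mixed case of submodularity. -/
theorem rr_sub_aux {𝓒 : Finset (Finset α)} (h : Sparse 𝓒) {X Y : Finset α}
    (hX : X ∈ 𝓒) (hY : Y ∉ 𝓒) :
    rr 𝓒 (X ∪ Y) + rr 𝓒 (X ∩ Y) ≤ rr 𝓒 X + rr 𝓒 Y := by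
  by_cases h1 : X ⊆ Y
  · rw [union_eq_right.2 h1, inter_eq_left.2 h1]; omega
  by_cases h2 : Y ⊆ X
  · rw [union_eq_left.2 h2, inter_eq_right.2 h2]
  have c1 : (X ∩ Y).card < X.card :=
    card_lt_card (inter_subset_left.ssubset_of_ne fun hh => h1 (inter_eq_left.1 hh))
  have c2 : (X ∩ Y).card < Y.card :=
    card_lt_card (inter_subset_right.ssubset_of_ne fun hh => h2 (inter_eq_right.1 hh))
  have := h.card_eq _ hX
  have := rr_le_card h (X ∩ Y)
  have := rr_le_five 𝓒 (X ∪ Y)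
  have : rr 𝓒 X = 4 := by simp [rr, hX]
  have : rr 𝓒 Y = min Y.card 5 := by simp [rr, hY]
  omega

theorem rr_sub {𝓒 : Finset (Finset α)} (h : Sparse 𝓒) (X Y : Finset α) :
    rr 𝓒 (X ∪ Y) + rr 𝓒 (X ∩ Y) ≤ rr 𝓒 X + rr 𝓒 Y := by
  by_cases hX : X ∈ 𝓒
  · by_cases hY : Y ∈ 𝓒
    · by_cases he : X = Y
      · rw [he, union_self, inter_self]
      have := h.inter_le _ hX _ hY he
      have := rr_le_card h (X ∩ Y)
      have := rr_le_five 𝓒 (X ∪ Y)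
      have : rr 𝓒 X = 4 := by simp [rr, hX]
      have : rr 𝓒 Y = 4 := by simp [rr, hY]
      omega
    · exact rr_sub_aux h hX hY
  · by_cases hY : Y ∈ 𝓒
    · have := rr_sub_aux h hY hX
      rw [union_comm, inter_comm] at this
      omega
    · have := card_union_add_card_inter X Y
      have := rr_le_card h (X ∩ Y)
      have := rr_le_five 𝓒 (X ∪ Y)
      have := rr_le_card h (X ∪ Y)
      have := card_le_card (inter_subset_left (s₁ := X) (s₂ := Y))
      have := card_le_card (inter_subset_right (s₁ := X) (s₂ := Y))
      have : rr 𝓒 X = min X.card 5 := by simp [rr, hX]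
      have : rr 𝓒 Y = min Y.card 5 := by simp [rr, hY]
      have := rr_le_five 𝓒 (X ∩ Y)
      omega

/-- Submodularity in a form convenient for applications. -/
theorem rr_submod {𝓒 : Finset (Finset α)} (h : Sparse 𝓒) (A B C D : Finset α)
    (h1 : C ⊆ A) (h2 : C ⊆ B) (h3 : D ⊆ A ∪ B) :
    rr 𝓒 D + rr 𝓒 C ≤ rr 𝓒 A + rr 𝓒 B := by
  have := rr_sub h A B
  have := rr_mono h h3
  have := rr_mono h (subset_inter h1 h2)
  omega

/-- A union spans, or is a modular pair, or is a circuit-hyperplane. -/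
theorem rr_tri {𝓒 : Finset (Finset α)} (h : Sparse 𝓒) (X Y : Finset α) :
    rr 𝓒 (X ∪ Y) = 5 ∨ rr 𝓒 X + rr 𝓒 Y = rr 𝓒 (X ∪ Y) + rr 𝓒 (X ∩ Y) ∨ X ∪ Y ∈ 𝓒 := by
  by_cases hU : X ∪ Y ∈ 𝓒
  · exact Or.inr (Or.inr hU)
  by_cases hc : (X ∪ Y).card ≤ 4
  · right; left
    have := card_le_card (subset_union_left (s₁ := X) (s₂ := Y))
    have := card_le_card (subset_union_right (s₁ := X) (s₂ := Y))
    have := card_le_card (inter_subset_left (s₁ := X) (s₂ := Y))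
    rw [rr_of_card_le h X (by omega), rr_of_card_le h Y (by omega), rr_of_card_le h _ hc,
      rr_of_card_le h (X ∩ Y) (by omega), card_union_add_card_inter]
  · left
    simp [rr, hU]
    omega

end Paving

/-! ### The Ingleton inequality -/

section Ingleton

variable {α : Type} [Fintype α] [DecidableEq α] {𝓒 : Finset (Finset α)}

/-- Submodularity with automatic inclusions. -/
theorem rsm (h : Sparse 𝓒) (A B C D : Finset α)
    (h1 : C ⊆ A := by grind) (h2 : C ⊆ B := by grind) (h3 : D ⊆ A ∪ B := by grind) :
    rr 𝓒 D + rr 𝓒 C ≤ rr 𝓒 A + rr 𝓒 B := rr_submod h A B C D h1 h2 h3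

/-- Monotonicity with automatic inclusion. -/
theorem rmo (h : Sparse 𝓒) (A B : Finset α) (h1 : A ⊆ B := by grind) :
    rr 𝓒 A ≤ rr 𝓒 B := rr_mono h h1

/-- The Ingleton inequality for the rank function `rr 𝓒`. -/
def IngP (𝓒 : Finset (Finset α)) (X1 X2 X3 X4 : Finset α) : Prop :=
  rr 𝓒 X3 + rr 𝓒 X4 + rr 𝓒 (X1 ∪ X2) + rr 𝓒 (X1 ∪ X3 ∪ X4) + rr 𝓒 (X2 ∪ X3 ∪ X4) ≤
    rr 𝓒 (X1 ∪ X3) + rr 𝓒 (X1 ∪ X4) + rr 𝓒 (X2 ∪ X3) + rr 𝓒 (X2 ∪ X4) + rr 𝓒 (X3 ∪ X4)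

theorem IngP.swap12 {X1 X2 X3 X4 : Finset α} (h : IngP 𝓒 X2 X1 X3 X4) :
    IngP 𝓒 X1 X2 X3 X4 := by
  unfold IngP at *
  rw [union_comm X2 X1] at h
  omega

theorem IngP.swap34 {X1 X2 X3 X4 : Finset α} (h : IngP 𝓒 X1 X2 X4 X3) :
    IngP 𝓒 X1 X2 X3 X4 := by
  unfold IngP at *
  rw [union_comm X4 X3, union_right_comm X1 X4 X3, union_right_comm X2 X4 X3] at h
  omega

theorem IngP.of_eq (h : Sparse 𝓒) {X1 X2 X3 X4 : Finset α}
    (e : rr 𝓒 (X1 ∪ X3) = rr 𝓒 (X1 ∪ X3 ∪ X4)) : IngP 𝓒 X1 X2 X3 X4 := by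
  unfold IngP
  have := rsm h (X1 ∪ X4) (X2 ∪ X4) X4 (X1 ∪ X2)
  have := rsm h (X2 ∪ X3) (X3 ∪ X4) X3 (X2 ∪ X3 ∪ X4)
  omega

theorem IngP.of_span (h : Sparse 𝓒) {X1 X2 X3 X4 : Finset α}
    (e : rr 𝓒 (X3 ∪ X4) = 5) : IngP 𝓒 X1 X2 X3 X4 := by
  unfold IngP
  have := rsm h (X1 ∪ X3) (X2 ∪ X3) X3 (X1 ∪ X2 ∪ X3)
  have := rsm h (X1 ∪ X4) (X2 ∪ X4) X4 (X1 ∪ X2 ∪ X4)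
  have := rsm h (X1 ∪ X2 ∪ X3) (X1 ∪ X2 ∪ X4) (X1 ∪ X2) (X1 ∪ X2 ∪ X3 ∪ X4)
  have := rmo h (X3 ∪ X4) (X1 ∪ X2 ∪ X3 ∪ X4)
  have := rr_le_five 𝓒 (X1 ∪ X3 ∪ X4)
  have := rr_le_five 𝓒 (X2 ∪ X3 ∪ X4)
  omega

theorem IngP.of_mod34 (h : Sparse 𝓒) {X1 X2 X3 X4 : Finset α}
    (e : rr 𝓒 X3 + rr 𝓒 X4 = rr 𝓒 (X3 ∪ X4) + rr 𝓒 (X3 ∩ X4)) : IngP 𝓒 X1 X2 X3 X4 := by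
  unfold IngP
  have := rsm h (X1 ∪ X3) (X1 ∪ X4) (X1 ∪ (X3 ∩ X4)) (X1 ∪ X3 ∪ X4)
  have := rsm h (X2 ∪ X3) (X2 ∪ X4) (X2 ∪ (X3 ∩ X4)) (X2 ∪ X3 ∪ X4)
  have := rsm h (X1 ∪ (X3 ∩ X4)) (X2 ∪ (X3 ∩ X4)) (X3 ∩ X4) (X1 ∪ X2)
  omega

theorem IngP.of_mod13 (h : Sparse 𝓒) {X1 X2 X3 X4 : Finset α}
    (e : rr 𝓒 X1 + rr 𝓒 X3 = rr 𝓒 (X1 ∪ X3) + rr 𝓒 (X1 ∩ X3)) : IngP 𝓒 X1 X2 X3 X4 := by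
  unfold IngP
  have := rsm h (X1 ∪ X4) (X3 ∪ X4) (X4 ∪ (X1 ∩ X3)) (X1 ∪ X3 ∪ X4)
  have := rsm h (X2 ∪ X4) (X4 ∪ (X1 ∩ X3)) X4 (X2 ∪ X4 ∪ (X1 ∩ X3))
  have := rsm h (X2 ∪ X4 ∪ (X1 ∩ X3)) (X2 ∪ X3) (X2 ∪ (X1 ∩ X3)) (X2 ∪ X3 ∪ X4)
  have := rsm h (X2 ∪ (X1 ∩ X3)) X1 (X1 ∩ X3) (X1 ∪ X2)
  omega

/-- The finite check for the Ingleton inequality. -/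
def HI (𝓒 : Finset (Finset α)) : Prop :=
  ∀ A ∈ 𝓒, ∀ B ∈ 𝓒, ∀ C ∈ 𝓒, ∀ D ∈ 𝓒, ∀ E ∈ 𝓒,
    A ≠ B → A ≠ E → B ≠ E → C ≠ D → C ≠ E → D ≠ E →
    (A ∩ C ∩ E).card = 3 → (B ∩ D ∩ E).card = 3 →
    (A ∩ B) ∪ (A ∩ C ∩ E) = A → (C ∩ D) ∪ (A ∩ C ∩ E) = C →
    (A ∩ B) ∪ (B ∩ D ∩ E) = B → (C ∩ D) ∪ (B ∩ D ∩ E) = D →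
    (A ∩ C ∩ E) ∪ (B ∩ D ∩ E) = E → rr 𝓒 ((A ∩ B) ∪ (C ∩ D)) ≤ 4

theorem rr_mem {X : Finset α} (hX : X ∈ 𝓒) : rr 𝓒 X = 4 := by simp [rr, hX]

/-- A set contained in two different circuit-hyperplanes has at most three elements. -/
theorem card_le_three (h : Sparse 𝓒) {X A B : Finset α} (hA : A ∈ 𝓒) (hB : B ∈ 𝓒)
    (hne : A ≠ B) (h1 : X ⊆ A := by grind) (h2 : X ⊆ B := by grind) : X.card ≤ 3 :=
  (card_le_card (subset_inter h1 h2)).trans (h.inter_le _ hA _ hB hne)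

theorem ing (h : Sparse 𝓒) (hI : HI 𝓒) (X1 X2 X3 X4 : Finset α) : IngP 𝓒 X1 X2 X3 X4 := by
  by_cases e1 : rr 𝓒 (X1 ∪ X3) = rr 𝓒 (X1 ∪ X3 ∪ X4)
  · exact IngP.of_eq h e1
  by_cases e2 : rr 𝓒 (X1 ∪ X4) = rr 𝓒 (X1 ∪ X3 ∪ X4)
  · exact (IngP.of_eq h (by rwa [union_right_comm])).swap34
  by_cases e3 : rr 𝓒 (X2 ∪ X3) = rr 𝓒 (X2 ∪ X3 ∪ X4)
  · exact (IngP.of_eq h e3).swap12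
  by_cases e4 : rr 𝓒 (X2 ∪ X4) = rr 𝓒 (X2 ∪ X3 ∪ X4)
  · exact (IngP.of_eq h (by rwa [union_right_comm])).swap34.swap12
  have l1 := rr_le_five 𝓒 (X1 ∪ X3 ∪ X4)
  have l2 := rr_le_five 𝓒 (X2 ∪ X3 ∪ X4)
  have m1 := rmo h (X1 ∪ X3) (X1 ∪ X3 ∪ X4)
  have m2 := rmo h (X1 ∪ X4) (X1 ∪ X3 ∪ X4)
  have m3 := rmo h (X2 ∪ X3) (X2 ∪ X3 ∪ X4)
  have m4 := rmo h (X2 ∪ X4) (X2 ∪ X3 ∪ X4)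
  rcases rr_tri h X3 X4 with t | t | hE
  · exact IngP.of_span h t
  · exact IngP.of_mod34 h t
  rcases rr_tri h X1 X3 with t | t | hA
  · omega
  · exact IngP.of_mod13 h t
  rcases rr_tri h X1 X4 with t | t | hB
  · omega
  · exact (IngP.of_mod13 h t).swap34
  rcases rr_tri h X2 X3 with t | t | hC
  · omega
  · exact (IngP.of_mod13 h t).swap12
  rcases rr_tri h X2 X4 with t | t | hD
  · omega
  · exact (IngP.of_mod13 h t).swap34.swap12
  have rA := rr_mem hA
  have rB := rr_mem hB
  have rC := rr_mem hC
  have rD := rr_mem hD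
  have rE := rr_mem hE
  have nAB : X1 ∪ X3 ≠ X1 ∪ X4 := fun hh => e1 (by congr 1; grind)
  have nAE : X1 ∪ X3 ≠ X3 ∪ X4 := fun hh => e1 (by congr 1; grind)
  have nBE : X1 ∪ X4 ≠ X3 ∪ X4 := fun hh => e2 (by congr 1; grind)
  have nCD : X2 ∪ X3 ≠ X2 ∪ X4 := fun hh => e3 (by congr 1; grind)
  have nCE : X2 ∪ X3 ≠ X3 ∪ X4 := fun hh => e3 (by congr 1; grind)
  have nDE : X2 ∪ X4 ≠ X3 ∪ X4 := fun hh => e4 (by congr 1; grind)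
  unfold IngP
  by_contra hcon
  have c3 := card_le_three h (X := X3) hA hE nAE
  have c4 := card_le_three h (X := X4) hB hE nBE
  have r3 := rr_of_card_le h X3 (by omega)
  have r4 := rr_of_card_le h X4 (by omega)
  have r12 := rr_le_five 𝓒 (X1 ∪ X2)
  have d3 := card_le_three h (X := (X1 ∪ X3) ∩ (X2 ∪ X3) ∩ (X3 ∪ X4)) hA hE nAE
  have d4 := card_le_three h (X := (X1 ∪ X4) ∩ (X2 ∪ X4) ∩ (X3 ∪ X4)) hB hE nBE
  have s3 : X3 = (X1 ∪ X3) ∩ (X2 ∪ X3) ∩ (X3 ∪ X4) :=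
    eq_of_subset_of_card_le (by grind) (by omega)
  have s4 : X4 = (X1 ∪ X4) ∩ (X2 ∪ X4) ∩ (X3 ∪ X4) :=
    eq_of_subset_of_card_le (by grind) (by omega)
  have key := hI _ hA _ hB _ hC _ hD _ hE nAB nAE nBE nCD nCE nDE
    (by rw [← s3]; omega) (by rw [← s4]; omega)
    (by rw [← s3]; grind) (by rw [← s3]; grind) (by rw [← s4]; grind) (by rw [← s4]; grind)
    (by rw [← s3, ← s4])
  have := rmo h (X1 ∪ X2) (((X1 ∪ X3) ∩ (X1 ∪ X4)) ∪ ((X2 ∪ X3) ∩ (X2 ∪ X4)))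
  omega

end Ingleton

/-! ### The fifth Kinser inequality -/

section Kinser

variable {α : Type} [Fintype α] [DecidableEq α] {𝓒 : Finset (Finset α)}

/-- The fifth Kinser inequality for the rank function `rr 𝓒`. -/
def KinP (𝓒 : Finset (Finset α)) (X1 X2 X3 X4 X5 : Finset α) : Prop :=
  rr 𝓒 (X1 ∪ X2) + rr 𝓒 X3 + rr 𝓒 X4 + rr 𝓒 X5 + rr 𝓒 (X1 ∪ X3 ∪ X5) +
      rr 𝓒 (X2 ∪ X3 ∪ X4) + rr 𝓒 (X2 ∪ X4 ∪ X5) ≤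
    rr 𝓒 (X1 ∪ X3) + rr 𝓒 (X1 ∪ X5) + rr 𝓒 (X2 ∪ X3) + rr 𝓒 (X2 ∪ X4) + rr 𝓒 (X2 ∪ X5) +
      rr 𝓒 (X3 ∪ X4) + rr 𝓒 (X4 ∪ X5)

theorem KinP.swap {X1 X2 X3 X4 X5 : Finset α} (h : KinP 𝓒 X1 X2 X5 X4 X3) :
    KinP 𝓒 X1 X2 X3 X4 X5 := by
  unfold KinP at *
  rw [union_comm X5 X4, union_comm X4 X3, union_right_comm X1 X5 X3,
    union_right_comm X2 X5 X4, union_right_comm X2 X4 X3] at h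
  omega

theorem KinP.of_a (h : Sparse 𝓒) {X1 X2 X3 X4 X5 : Finset α}
    (e : rr 𝓒 (X3 ∪ X4) = rr 𝓒 (X2 ∪ X3 ∪ X4)) : KinP 𝓒 X1 X2 X3 X4 X5 := by
  unfold KinP
  have := rsm h (X1 ∪ X3) (X2 ∪ X3) X3 (X1 ∪ X2 ∪ X3)
  have := rsm h (X1 ∪ X5) (X2 ∪ X5) X5 (X1 ∪ X2 ∪ X5)
  have := rsm h (X1 ∪ X2 ∪ X3) (X1 ∪ X2 ∪ X5) (X1 ∪ X2) (X1 ∪ X3 ∪ X5)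
  have := rsm h (X2 ∪ X4) (X4 ∪ X5) X4 (X2 ∪ X4 ∪ X5)
  omega

theorem KinP.of_b (h : Sparse 𝓒) {X1 X2 X3 X4 X5 : Finset α}
    (e : rr 𝓒 (X1 ∪ X3) = rr 𝓒 (X1 ∪ X3 ∪ X5)) : KinP 𝓒 X1 X2 X3 X4 X5 := by
  unfold KinP
  have := rsm h (X2 ∪ X3) (X3 ∪ X4) X3 (X2 ∪ X3 ∪ X4)
  have := rsm h (X2 ∪ X4) (X4 ∪ X5) X4 (X2 ∪ X4 ∪ X5)
  have := rsm h (X1 ∪ X5) (X2 ∪ X5) X5 (X1 ∪ X2)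
  omega

theorem KinP.of_c (h : Sparse 𝓒) (hI : HI 𝓒) {X1 X2 X3 X4 X5 : Finset α}
    (e : rr 𝓒 (X2 ∪ X3) = rr 𝓒 (X2 ∪ X3 ∪ X4)) : KinP 𝓒 X1 X2 X3 X4 X5 := by
  unfold KinP
  have := ing h hI X1 X2 X4 X5
  unfold IngP at this
  have := rsm h (X1 ∪ X3) (X3 ∪ X4) X3 (X1 ∪ X3 ∪ X4)
  have := rsm h (X1 ∪ X3 ∪ X4) (X1 ∪ X4 ∪ X5) (X1 ∪ X4) (X1 ∪ X3 ∪ X5)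
  omega

theorem KinP.of_d (h : Sparse 𝓒) (hI : HI 𝓒) {X1 X2 X3 X4 X5 : Finset α}
    (e : rr 𝓒 (X2 ∪ X4) = 5) : KinP 𝓒 X1 X2 X3 X4 X5 := by
  unfold KinP
  have := ing h hI X1 X2 X3 X5
  unfold IngP at this
  have := rsm h (X3 ∪ X4) (X4 ∪ X5) X4 (X3 ∪ X4 ∪ X5)
  have := rsm h (X3 ∪ X4 ∪ X5) (X2 ∪ X3 ∪ X5) (X3 ∪ X5) (X2 ∪ X4)
  have := rr_le_five 𝓒 (X2 ∪ X3 ∪ X4)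
  have := rr_le_five 𝓒 (X2 ∪ X4 ∪ X5)
  omega

theorem KinP.of_mod34 (h : Sparse 𝓒) (hI : HI 𝓒) {X1 X2 X3 X4 X5 : Finset α}
    (e : rr 𝓒 X3 + rr 𝓒 X4 = rr 𝓒 (X3 ∪ X4) + rr 𝓒 (X3 ∩ X4)) :
    KinP 𝓒 X1 X2 X3 X4 X5 := by
  unfold KinP
  have := ing h hI X1 X2 (X3 ∩ X4) X5
  unfold IngP at this
  have := rsm h (X2 ∪ X3) (X2 ∪ X4) (X2 ∪ (X3 ∩ X4)) (X2 ∪ X3 ∪ X4)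
  have := rsm h (X1 ∪ X3) (X1 ∪ (X3 ∩ X4) ∪ X5) (X1 ∪ (X3 ∩ X4)) (X1 ∪ X3 ∪ X5)
  have := rsm h (X4 ∪ X5) (X2 ∪ (X3 ∩ X4) ∪ X5) ((X3 ∩ X4) ∪ X5) (X2 ∪ X4 ∪ X5)
  omega

theorem KinP.of_mod23 (h : Sparse 𝓒) {X1 X2 X3 X4 X5 : Finset α}
    (e : rr 𝓒 X2 + rr 𝓒 X3 = rr 𝓒 (X2 ∪ X3) + rr 𝓒 (X2 ∩ X3)) :
    KinP 𝓒 X1 X2 X3 X4 X5 := by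
  unfold KinP
  have := rsm h (X2 ∪ X4) (X3 ∪ X4) (X4 ∪ (X2 ∩ X3)) (X2 ∪ X3 ∪ X4)
  have := rsm h (X4 ∪ X5) (X4 ∪ (X2 ∩ X3)) X4 (X4 ∪ X5 ∪ (X2 ∩ X3))
  have := rsm h (X4 ∪ X5 ∪ (X2 ∩ X3)) (X2 ∪ X5) (X5 ∪ (X2 ∩ X3)) (X2 ∪ X4 ∪ X5)
  have := rsm h (X1 ∪ X5) (X5 ∪ (X2 ∩ X3)) X5 (X1 ∪ X5 ∪ (X2 ∩ X3))
  have := rsm h (X1 ∪ X5 ∪ (X2 ∩ X3)) (X1 ∪ X3) (X1 ∪ (X2 ∩ X3)) (X1 ∪ X3 ∪ X5)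
  have := rsm h (X1 ∪ (X2 ∩ X3)) X2 (X2 ∩ X3) (X1 ∪ X2)
  omega

theorem KinP.of_mod24 (h : Sparse 𝓒) {X1 X2 X3 X4 X5 : Finset α}
    (e : rr 𝓒 X2 + rr 𝓒 X4 = rr 𝓒 (X2 ∪ X4) + rr 𝓒 (X2 ∩ X4)) :
    KinP 𝓒 X1 X2 X3 X4 X5 := by
  unfold KinP
  have := rsm h (X2 ∪ X3) (X3 ∪ X4) (X3 ∪ (X2 ∩ X4)) (X2 ∪ X3 ∪ X4)
  have := rsm h (X2 ∪ X5) (X4 ∪ X5) (X5 ∪ (X2 ∩ X4)) (X2 ∪ X4 ∪ X5)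
  have := rsm h (X1 ∪ X3) (X3 ∪ (X2 ∩ X4)) X3 (X1 ∪ X3 ∪ (X2 ∩ X4))
  have := rsm h (X1 ∪ X5) (X5 ∪ (X2 ∩ X4)) X5 (X1 ∪ X5 ∪ (X2 ∩ X4))
  have := rsm h (X1 ∪ X3 ∪ (X2 ∩ X4)) (X1 ∪ X5 ∪ (X2 ∩ X4)) (X1 ∪ (X2 ∩ X4)) (X1 ∪ X3 ∪ X5)
  have := rsm h (X1 ∪ (X2 ∩ X4)) X2 (X2 ∩ X4) (X1 ∪ X2)
  omega

/-- The finite check for the fifth Kinser inequality. -/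
def HK (𝓒 : Finset (Finset α)) : Prop :=
  ∀ a ∈ 𝓒, ∀ b ∈ 𝓒, ∀ c ∈ 𝓒, ∀ d ∈ 𝓒, ∀ f ∈ 𝓒,
    a ≠ d → a ≠ b → b ≠ d → b ≠ f → b ≠ c → c ≠ f → ¬ (a = c ∧ d = f) →
    (a ∩ d) ∪ (b ∩ d ∩ f) = d → (a ∩ b ∩ c) ∪ (a ∩ d) = a →
    (a ∩ b ∩ c) ∪ (b ∩ d ∩ f) = b → (a ∩ b ∩ c) ∪ (c ∩ f) = c →
    (b ∩ d ∩ f) ∪ (c ∩ f) = f →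
    (a ∩ b ∩ c).card + (a ∩ d).card + (b ∩ d ∩ f).card + (c ∩ f).card ≤ 11 ∧
    ∀ x : Finset α, x.card ≤ 3 → rr 𝓒 (x ∪ (a ∩ d)) ≤ 4 → rr 𝓒 (x ∪ (c ∩ f)) ≤ 4 →
      KinP 𝓒 x (a ∩ b ∩ c) (a ∩ d) (b ∩ d ∩ f) (c ∩ f)

theorem kin (h : Sparse 𝓒) (hI : HI 𝓒) (hK : HK 𝓒) (X1 X2 X3 X4 X5 : Finset α) :
    KinP 𝓒 X1 X2 X3 X4 X5 := by
  by_cases e1 : rr 𝓒 (X3 ∪ X4) = rr 𝓒 (X2 ∪ X3 ∪ X4)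
  · exact KinP.of_a h e1
  by_cases e2 : rr 𝓒 (X4 ∪ X5) = rr 𝓒 (X2 ∪ X4 ∪ X5)
  · exact (KinP.of_a h (by rwa [union_comm X5 X4, union_right_comm])).swap
  by_cases e3 : rr 𝓒 (X1 ∪ X3) = rr 𝓒 (X1 ∪ X3 ∪ X5)
  · exact KinP.of_b h e3
  by_cases e4 : rr 𝓒 (X1 ∪ X5) = rr 𝓒 (X1 ∪ X3 ∪ X5)
  · exact (KinP.of_b h (by rwa [union_right_comm])).swap
  by_cases e5 : rr 𝓒 (X2 ∪ X3) = rr 𝓒 (X2 ∪ X3 ∪ X4)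
  · exact KinP.of_c h hI e5
  by_cases e6 : rr 𝓒 (X2 ∪ X5) = rr 𝓒 (X2 ∪ X4 ∪ X5)
  · exact (KinP.of_c h hI (by rwa [union_right_comm])).swap
  have l1 := rr_le_five 𝓒 (X2 ∪ X3 ∪ X4)
  have l2 := rr_le_five 𝓒 (X2 ∪ X4 ∪ X5)
  have l3 := rr_le_five 𝓒 (X1 ∪ X3 ∪ X5)
  have m1 := rmo h (X3 ∪ X4) (X2 ∪ X3 ∪ X4)
  have m2 := rmo h (X4 ∪ X5) (X2 ∪ X4 ∪ X5)
  have m3 := rmo h (X1 ∪ X3) (X1 ∪ X3 ∪ X5)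
  have m4 := rmo h (X1 ∪ X5) (X1 ∪ X3 ∪ X5)
  have m5 := rmo h (X2 ∪ X3) (X2 ∪ X3 ∪ X4)
  have m6 := rmo h (X2 ∪ X5) (X2 ∪ X4 ∪ X5)
  rcases rr_tri h X2 X4 with t | t | hb
  · exact KinP.of_d h hI t
  · exact KinP.of_mod24 h t
  rcases rr_tri h X2 X3 with t | t | ha
  · omega
  · exact KinP.of_mod23 h t
  rcases rr_tri h X2 X5 with t | t | hc
  · omega
  · exact (KinP.of_mod23 h t).swap
  rcases rr_tri h X3 X4 with t | t | hd
  · omega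
  · exact KinP.of_mod34 h hI t
  rcases rr_tri h X4 X5 with t | t | hf
  · omega
  · refine (KinP.of_mod34 h hI ?_).swap
    rw [union_comm X5 X4, inter_comm X5 X4]
    omega
  have ra := rr_mem ha
  have rb := rr_mem hb
  have rc := rr_mem hc
  have rd := rr_mem hd
  have rf := rr_mem hf
  have nab : X2 ∪ X3 ≠ X2 ∪ X4 := fun hh => e5 (by congr 1; grind)
  have nad : X2 ∪ X3 ≠ X3 ∪ X4 := fun hh => e5 (by congr 1; grind)
  have nbd : X2 ∪ X4 ≠ X3 ∪ X4 := fun hh => e1 (by congr 1; grind)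
  have nbc : X2 ∪ X4 ≠ X2 ∪ X5 := fun hh => e6 (by congr 1; grind)
  have nbf : X2 ∪ X4 ≠ X4 ∪ X5 := fun hh => e2 (by congr 1; grind)
  have ncf : X2 ∪ X5 ≠ X4 ∪ X5 := fun hh => e6 (by congr 1; grind)
  by_contra hcon
  have hcon' := hcon
  unfold KinP at hcon
  have c2 := card_le_three h (X := X2) ha hb nab
  have c3 := card_le_three h (X := X3) ha hd nad
  have c4 := card_le_three h (X := X4) hb hd nbd
  have c5 := card_le_three h (X := X5) hc hf ncf
  have r2 := rr_of_card_le h X2 (by omega)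
  have r3 := rr_of_card_le h X3 (by omega)
  have r4 := rr_of_card_le h X4 (by omega)
  have r5 := rr_of_card_le h X5 (by omega)
  have s1 := rsm h (X1 ∪ X3) (X1 ∪ X5) X1 (X1 ∪ X3 ∪ X5)
  have s2 := rsm h X1 X2 ∅ (X1 ∪ X2)
  have r12 := rr_le_five 𝓒 (X1 ∪ X2)
  have c1 : X1.card ≤ 3 := by
    by_contra hc1
    have : 4 ≤ rr 𝓒 X1 := by unfold rr; split_ifs <;> omega
    omega
  by_cases hsp : X2 ∪ X3 = X2 ∪ X5 ∧ X3 ∪ X4 = X4 ∪ X5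
  · have hu := card_le_three h (X := X3 ∪ X5) ha hd nad
    by_cases h35 : X3.card = 3
    · have : X3 = X3 ∪ X5 := eq_of_subset_of_card_le (by grind) (by omega)
      exact e3 (by rw [union_assoc, ← this])
    · have : X5 = X3 ∪ X5 := eq_of_subset_of_card_le (by grind) (by omega)
      exact e4 (by rw [union_assoc, ← this])
  have i2 : X2 ⊆ (X2 ∪ X3) ∩ (X2 ∪ X4) ∩ (X2 ∪ X5) := by grind
  have i3 : X3 ⊆ (X2 ∪ X3) ∩ (X3 ∪ X4) := by grind
  have i4 : X4 ⊆ (X2 ∪ X4) ∩ (X3 ∪ X4) ∩ (X4 ∪ X5) := by grind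
  have i5 : X5 ⊆ (X2 ∪ X5) ∩ (X4 ∪ X5) := by grind
  obtain ⟨k1, k2⟩ := hK _ ha _ hb _ hc _ hd _ hf nad nab nbd nbf nbc ncf hsp
    (by grind) (by grind) (by grind) (by grind) (by grind)
  have j2 := card_le_card i2
  have j3 := card_le_card i3
  have j4 := card_le_card i4
  have j5 := card_le_card i5
  have q2 := eq_of_subset_of_card_le i2 (by omega)
  have q3 := eq_of_subset_of_card_le i3 (by omega)
  have q4 := eq_of_subset_of_card_le i4 (by omega)
  have q5 := eq_of_subset_of_card_le i5 (by omega)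
  have k3 := k2 X1 c1
  rw [← q2, ← q3, ← q4, ← q5] at k3
  exact hcon' (k3 (by omega) (by omega))

end Kinser

/-! ### The finite checks -/

/-- Circuit-hyperplanes of the witness, as bit masks of subsets of `Fin 10`. -/
def cm : List ℕ := [962, 865, 218, 188, 117, 920, 820]

/-- Circuit-hyperplanes of the dual of the witness (complementary masks). -/
def cn : List ℕ := [61, 158, 805, 835, 906, 103, 203]

/-- Number of bits of a mask below `2 ^ 10`. -/
def pc (a : ℕ) : ℕ :=
  a % 2 + a / 2 % 2 + a / 4 % 2 + a / 8 % 2 + a / 16 % 2 + a / 32 % 2 + a / 64 % 2 +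
  a / 128 % 2 + a / 256 % 2 + a / 512 % 2

/-- Rank of a mask. -/
def rk (L : List ℕ) (a : ℕ) : ℕ := if L.contains a then 4 else min (pc a) 5

/-- Check for the Ingleton inequality. -/
def chkI (L : List ℕ) : Bool :=
  L.all fun e => L.all fun a => L.all fun c =>
    let y3 := a &&& c &&& e
    (a == e) || (c == e) || (pc y3 != 3) || (L.all fun b => L.all fun d =>
      let y4 := b &&& d &&& e
      (a == b) || (b == e) || (c == d) || (d == e) || (pc y4 != 3) || ((a &&& b) ||| y3) != a || ((c &&& d) ||| y3) != c ||
        ((a &&& b) ||| y4) != b || ((c &&& d) ||| y4) != d || y3 ||| y4 != e ||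
        Nat.ble (rk L ((a &&& b) ||| (c &&& d))) 4)

/-- Check for the fifth Kinser inequality. -/
def chkK (L : List ℕ) : Bool :=
  L.all fun a => L.all fun d => (a == d) || (L.all fun b => (a == b) || (b == d) ||
   (L.all fun f => (b == f) ||
     (let y3 := a &&& d
      let y4 := b &&& d &&& f
      (y3 ||| y4 != d) || (L.all fun c => (b == c) || (c == f) || ((a == c) && (d == f)) ||
       (let y2 := a &&& b &&& c
        let y5 := c &&& f
        (y2 ||| y3 != a) || (y2 ||| y4 != b) || (y2 ||| y5 != c) || (y4 ||| y5 != f) ||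
        (Nat.ble (pc y2 + pc y3 + pc y4 + pc y5) 11 && ((List.range 1024).all fun x =>
          Nat.ble 4 (pc x) || Nat.ble 5 (rk L (x ||| y3)) || Nat.ble 5 (rk L (x ||| y5)) ||
          Nat.ble (rk L (x ||| y2) + rk L y3 + rk L y4 + rk L y5 + rk L (x ||| y3 ||| y5)
            + rk L (y2 ||| y3 ||| y4) + rk L (y2 ||| y4 ||| y5))
            (rk L (x ||| y3) + rk L (x ||| y5) + rk L (y2 ||| y3) + rk L (y2 ||| y4)
            + rk L (y2 ||| y5) + rk L (y3 ||| y4) + rk L (y4 ||| y5)))))))))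
set_option maxRecDepth 100000 in
theorem chkI_cm : chkI cm = true := by decide +kernel
set_option maxRecDepth 100000 in
theorem chkK_cm : chkK cm = true := by decide +kernel

theorem chkI_spec {L : List ℕ} (h : chkI L = true) {a b c d e : ℕ} (ha : a ∈ L) (hb : b ∈ L)
    (hc : c ∈ L) (hd : d ∈ L) (he : e ∈ L) (n1 : a ≠ b) (n2 : a ≠ e) (n3 : b ≠ e)
    (n4 : c ≠ d) (n5 : c ≠ e) (n6 : d ≠ e) (p3 : pc (a &&& c &&& e) = 3)
    (p4 : pc (b &&& d &&& e) = 3) (u1 : (a &&& b) ||| (a &&& c &&& e) = a)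
    (u2 : (c &&& d) ||| (a &&& c &&& e) = c) (u3 : (a &&& b) ||| (b &&& d &&& e) = b)
    (u4 : (c &&& d) ||| (b &&& d &&& e) = d)
    (u5 : (a &&& c &&& e) ||| (b &&& d &&& e) = e) :
    rk L ((a &&& b) ||| (c &&& d)) ≤ 4 := by
  simp only [chkI, List.all_eq_true, Bool.or_eq_true, beq_iff_eq, bne_iff_ne, ne_eq] at h
  have h1 := h e he a ha c hc
  simp only [n2, n5, p3, not_true_eq_false, false_or] at h1
  have h2 := h1 b hb d hd
  simp only [n1, n3, n4, n6, p4, u1, u2, u3, u4, u5, not_true_eq_false, false_or] at h2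
  exact Nat.le_of_ble_eq_true h2

theorem chkK_spec {L : List ℕ} (h : chkK L = true) {a b c d f : ℕ} (ha : a ∈ L) (hb : b ∈ L)
    (hc : c ∈ L) (hd : d ∈ L) (hf : f ∈ L) (n1 : a ≠ d) (n2 : a ≠ b) (n3 : b ≠ d)
    (n4 : b ≠ f) (n5 : b ≠ c) (n6 : c ≠ f) (n7 : ¬ (a = c ∧ d = f))
    (u1 : (a &&& d) ||| (b &&& d &&& f) = d) (u2 : (a &&& b &&& c) ||| (a &&& d) = a)
    (u3 : (a &&& b &&& c) ||| (b &&& d &&& f) = b) (u4 : (a &&& b &&& c) ||| (c &&& f) = c)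
    (u5 : (b &&& d &&& f) ||| (c &&& f) = f) :
    pc (a &&& b &&& c) + pc (a &&& d) + pc (b &&& d &&& f) + pc (c &&& f) ≤ 11 ∧
    ∀ x < 1024, pc x ≤ 3 → rk L (x ||| (a &&& d)) ≤ 4 → rk L (x ||| (c &&& f)) ≤ 4 →
      rk L (x ||| (a &&& b &&& c)) + rk L (a &&& d) + rk L (b &&& d &&& f) + rk L (c &&& f)
          + rk L (x ||| (a &&& d) ||| (c &&& f))
          + rk L ((a &&& b &&& c) ||| (a &&& d) ||| (b &&& d &&& f))
          + rk L ((a &&& b &&& c) ||| (b &&& d &&& f) ||| (c &&& f)) ≤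
        rk L (x ||| (a &&& d)) + rk L (x ||| (c &&& f))
          + rk L ((a &&& b &&& c) ||| (a &&& d))
          + rk L ((a &&& b &&& c) ||| (b &&& d &&& f))
          + rk L ((a &&& b &&& c) ||| (c &&& f)) + rk L ((a &&& d) ||| (b &&& d &&& f))
          + rk L ((b &&& d &&& f) ||| (c &&& f)) := by
  simp only [chkK, List.all_eq_true, Bool.or_eq_true, Bool.and_eq_true, beq_iff_eq,
    bne_iff_ne, ne_eq, List.mem_range] at h
  have h1 := h a ha d hd
  simp only [n1, false_or] at h1
  have h2 := h1 b hb
  simp only [n2, n3, false_or] at h2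
  have h3 := h2 f hf
  simp only [n4, u1, not_true_eq_false, false_or] at h3
  have h4 := h3 c hc
  simp only [n5, n6, n7, u2, u3, u4, u5, not_true_eq_false, false_or] at h4
  refine ⟨Nat.le_of_ble_eq_true h4.1, fun x hx hpc h5 h6 => ?_⟩
  simp only [u1, u2, u3, u4, u5]
  rcases h4.2 x hx with ((h7 | h7) | h7) | h7
  · have := Nat.le_of_ble_eq_true h7; omega
  · have := Nat.le_of_ble_eq_true h7; omega
  · have := Nat.le_of_ble_eq_true h7; omega
  · exact Nat.le_of_ble_eq_true h7

/-! ### Masks as sets -/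

/-- The subset of `Fin 10` encoded by a mask. -/
def dec (m : ℕ) : Finset (Fin 10) := univ.filter (fun i => m.testBit i = true)

theorem dec_or (a b : ℕ) : dec a ∪ dec b = dec (a ||| b) := by
  ext i; simp [dec, Nat.testBit_or]

theorem dec_and (a b : ℕ) : dec a ∩ dec b = dec (a &&& b) := by
  ext i; simp [dec, Nat.testBit_and]

theorem dec_inj {a b : ℕ} (ha : a < 1024) (hb : b < 1024) (h : dec a = dec b) : a = b := by
  apply Nat.eq_of_testBit_eq
  intro i
  by_cases hi : i < 10
  · have := congrArg (fun s => (⟨i, hi⟩ : Fin 10) ∈ s) h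
    simp only [dec, mem_filter, mem_univ, true_and, eq_iff_iff] at this
    exact Bool.eq_iff_iff.2 this
  · have h2 : 1024 ≤ 2 ^ i := Nat.pow_le_pow_right (n := 2) (by norm_num) (not_lt.1 hi)
    rw [Nat.testBit_lt_two_pow (ha.trans_le h2), Nat.testBit_lt_two_pow (hb.trans_le h2)]

theorem dec_surj (X : Finset (Fin 10)) : ∃ m < 1024, dec m = X := by
  have hb : Function.Bijective (fun m : Fin 1024 => dec m) := by
    rw [Fintype.bijective_iff_injective_and_card]
    refine ⟨fun a b h => Fin.ext (dec_inj a.2 b.2 h), by simp⟩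
  obtain ⟨m, hm⟩ := hb.2 X
  exact ⟨m, m.2, hm⟩

theorem card_dec (a : ℕ) : (dec a).card = pc a := by
  have key : ∀ i : ℕ, (if a.testBit i = true then 1 else 0) = a / 2 ^ i % 2 := by
    intro i
    rw [Nat.testBit_eq_decide_div_mod_eq]
    have := Nat.mod_two_eq_zero_or_one (a / 2 ^ i)
    split_ifs with h
    · simpa using (of_decide_eq_true h).symm
    · have : ¬ a / 2 ^ i % 2 = 1 := fun hh => h (decide_eq_true hh)
      omega
  simp only [dec, card_filter, key, Fin.sum_univ_succ, pc]
  simp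
  ring_nf

/-- The collection of sets encoded by a list of masks. -/
def fam (L : List ℕ) : Finset (Finset (Fin 10)) := (L.map dec).toFinset

theorem mem_fam {L : List ℕ} {X : Finset (Fin 10)} : X ∈ fam L ↔ ∃ a ∈ L, dec a = X := by
  simp [fam]

theorem dec_mem_fam {L : List ℕ} (hL : ∀ a ∈ L, a < 1024) {a : ℕ} (ha : a < 1024) :
    dec a ∈ fam L ↔ a ∈ L := by
  rw [mem_fam]
  constructor
  · rintro ⟨b, hb, e⟩
    rwa [← dec_inj (hL b hb) ha e]
  · exact fun h => ⟨a, h, rfl⟩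

theorem rr_dec {L : List ℕ} (hL : ∀ a ∈ L, a < 1024) {a : ℕ} (ha : a < 1024) :
    rr (fam L) (dec a) = rk L a := by
  unfold rr rk
  simp only [dec_mem_fam hL ha, card_dec, List.contains_iff_mem]

theorem sparse_fam {L : List ℕ} (h5 : ∀ a ∈ L, pc a = 5)
    (h3 : ∀ a ∈ L, ∀ b ∈ L, a ≠ b → pc (a &&& b) ≤ 3) : Sparse (fam L) := by
  constructor
  · intro C hC
    obtain ⟨a, ha, rfl⟩ := mem_fam.1 hC
    rw [card_dec, h5 a ha]
  · intro C hC D hD hne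
    obtain ⟨a, ha, rfl⟩ := mem_fam.1 hC
    obtain ⟨b, hb, rfl⟩ := mem_fam.1 hD
    rw [dec_and, card_dec]
    exact h3 a ha b hb fun hh => hne (hh ▸ rfl)

theorem and_lt {a b : ℕ} (hb : b < 1024) : a &&& b < 1024 :=
  Nat.and_lt_two_pow (n := 10) a hb

theorem or_lt {a b : ℕ} (ha : a < 1024) (hb : b < 1024) : a ||| b < 1024 :=
  Nat.or_lt_two_pow (n := 10) ha hb

theorem HI_fam {L : List ℕ} (hL : ∀ a ∈ L, a < 1024) (h : chkI L = true) : HI (fam L) := by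
  intro A hA B hB C hC D hD E hE
  obtain ⟨a, ha, rfl⟩ := mem_fam.1 hA
  obtain ⟨b, hb, rfl⟩ := mem_fam.1 hB
  obtain ⟨c, hc, rfl⟩ := mem_fam.1 hC
  obtain ⟨d, hd, rfl⟩ := mem_fam.1 hD
  obtain ⟨e, he, rfl⟩ := mem_fam.1 hE
  have la := hL a ha
  have lb := hL b hb
  have lc := hL c hc
  have ld := hL d hd
  have le := hL e he
  have l3 : a &&& c &&& e < 1024 := and_lt le
  have l4 : b &&& d &&& e < 1024 := and_lt le
  have l1 : a &&& b < 1024 := and_lt lb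
  have l2 : c &&& d < 1024 := and_lt ld
  simp only [dec_and, dec_or, card_dec]
  rw [rr_dec hL (or_lt l1 l2)]
  intro n1 n2 n3 n4 n5 n6 p3 p4 u1 u2 u3 u4 u5
  exact chkI_spec h ha hb hc hd he (ne_of_apply_ne dec n1) (ne_of_apply_ne dec n2)
    (ne_of_apply_ne dec n3) (ne_of_apply_ne dec n4) (ne_of_apply_ne dec n5)
    (ne_of_apply_ne dec n6) p3 p4 (dec_inj (or_lt l1 l3) la u1) (dec_inj (or_lt l2 l3) lc u2)
    (dec_inj (or_lt l1 l4) lb u3) (dec_inj (or_lt l2 l4) ld u4) (dec_inj (or_lt l3 l4) le u5)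

theorem HK_fam {L : List ℕ} (hL : ∀ a ∈ L, a < 1024) (h : chkK L = true) : HK (fam L) := by
  intro A hA B hB C hC D hD F hF
  obtain ⟨a, ha, rfl⟩ := mem_fam.1 hA
  obtain ⟨b, hb, rfl⟩ := mem_fam.1 hB
  obtain ⟨c, hc, rfl⟩ := mem_fam.1 hC
  obtain ⟨d, hd, rfl⟩ := mem_fam.1 hD
  obtain ⟨f, hf, rfl⟩ := mem_fam.1 hF
  have la := hL a ha
  have lb := hL b hb
  have lc := hL c hc
  have ld := hL d hd
  have lf := hL f hf
  have l2 : a &&& b &&& c < 1024 := and_lt lc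
  have l3 : a &&& d < 1024 := and_lt ld
  have l4 : b &&& d &&& f < 1024 := and_lt lf
  have l5 : c &&& f < 1024 := and_lt lf
  simp only [dec_and, dec_or, card_dec]
  intro n1 n2 n3 n4 n5 n6 n7 u1 u2 u3 u4 u5
  obtain ⟨k1, k2⟩ := chkK_spec h ha hb hc hd hf (ne_of_apply_ne dec n1)
    (ne_of_apply_ne dec n2) (ne_of_apply_ne dec n3) (ne_of_apply_ne dec n4)
    (ne_of_apply_ne dec n5) (ne_of_apply_ne dec n6)
    (fun hh => n7 ⟨congrArg dec hh.1, congrArg dec hh.2⟩)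
    (dec_inj (or_lt l3 l4) ld u1) (dec_inj (or_lt l2 l3) la u2) (dec_inj (or_lt l2 l4) lb u3)
    (dec_inj (or_lt l2 l5) lc u4) (dec_inj (or_lt l4 l5) lf u5)
  refine ⟨k1, fun X => ?_⟩
  obtain ⟨x, lx, rfl⟩ := dec_surj X
  unfold KinP
  simp only [dec_or, card_dec]
  rw [rr_dec hL (or_lt lx l3), rr_dec hL (or_lt lx l5), rr_dec hL (or_lt lx l2), rr_dec hL l3,
    rr_dec hL l4, rr_dec hL l5, rr_dec hL (or_lt (or_lt lx l3) l5),
    rr_dec hL (or_lt (or_lt l2 l3) l4), rr_dec hL (or_lt (or_lt l2 l4) l5),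
    rr_dec hL (or_lt l2 l3), rr_dec hL (or_lt l2 l4), rr_dec hL (or_lt l2 l5),
    rr_dec hL (or_lt l3 l4), rr_dec hL (or_lt l4 l5)]
  exact k2 x lx

/-! ### The witness -/

theorem cm_lt : ∀ a ∈ cm, a < 1024 := by decide

theorem cn_lt : ∀ a ∈ cn, a < 1024 := by decide

theorem cm_sparse : Sparse (fam cm) := sparse_fam (by decide +kernel) (by decide +kernel)

theorem cn_sparse : Sparse (fam cn) := sparse_fam (by decide +kernel) (by decide +kernel)

theorem dec_compl (a : ℕ) (ha : a < 1024) : (dec a)ᶜ = dec (1023 - a) := by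
  ext i
  have h := Nat.testBit_two_pow_sub_succ (x := a) (n := 10) ha i
  have e : 2 ^ 10 - (a + 1) = 1023 - a := by omega
  rw [e] at h
  simp [dec, h, i.2]

theorem cm_cn : ∀ a < 1024, (a ∈ cn ↔ 1023 - a ∈ cm) := by
  intro a ha
  simp only [cn, cm, List.mem_cons, List.not_mem_nil, or_false]
  omega

theorem dual_eq : (spm (fam cm) cm_sparse)✶ = spm (fam cn) cn_sparse := by
  refine spm_dual _ _ _ _ (by simp) fun X => ?_
  obtain ⟨a, ha, rfl⟩ := dec_surj X
  rw [dec_compl a ha, dec_mem_fam cn_lt ha, dec_mem_fam cm_lt (by omega)]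
  exact cm_cn a ha

theorem kinserIneq_iff (L : List ℕ) (h : Sparse (fam L)) (X : ℕ → Finset (Fin 10)) :
    (spm (fam L) h).KinserIneq 5 (fun i => (X i : Set (Fin 10))) ↔
      KinP (fam L) (X 1) (X 2) (X 3) (X 4) (X 5) := by
  have e3 : Finset.Icc 3 5 = ({3, 4, 5} : Finset ℕ) := by decide
  have e4 : Finset.Icc 4 5 = ({4, 5} : Finset ℕ) := by decide
  unfold Matroid.KinserIneq KinP
  simp only [e3, e4, ← coe_union, spm_rnk]
  simp
  constructor <;> intro hh <;> omega

theorem mem_witness : (spm (fam cm) cm_sparse).MemKinserClass 5 := by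
  intro X _
  choose Y hY using fun i => (X i).toFinite.exists_finset_coe
  obtain rfl : (fun i => (Y i : Set (Fin 10))) = X := funext hY
  rw [kinserIneq_iff]
  exact kin cm_sparse (HI_fam cm_lt chkI_cm) (HK_fam cm_lt chkK_cm) _ _ _ _ _

/-- The masks of the five sets violating the inequality in the dual. -/
def bad : ℕ → ℕ
  | 1 => 28
  | 2 => 768
  | 3 => 37
  | 4 => 67
  | _ => 138

theorem not_mem_dual : ¬ (spm (fam cn) cn_sparse).MemKinserClass 5 := by
  intro h
  have h1 := h (fun i => (dec (bad i) : Set (Fin 10))) (fun _ _ => Set.subset_univ _)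
  rw [kinserIneq_iff cn cn_sparse (fun i => dec (bad i))] at h1
  unfold KinP at h1
  simp only [bad, dec_or] at h1
  repeat rw [rr_dec cn_lt (by decide)] at h1
  revert h1
  decide +kernel

end KinserFive

/-- `K 5 ≠ K 5✶` : there is a finite matroid satisfying the 5th Kinser inequality whose
dual violates it. -/
theorem Matroid.exists_memKinserClass_five_dual_not :
    ∃ (α : Type) (M : Matroid α), M.Finite ∧ M.MemKinserClass 5 ∧
      ¬ M✶.MemKinserClass 5 := by
  refine ⟨Fin 10, KinserFive.spm (KinserFive.fam KinserFive.cm) KinserFive.cm_sparse,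
    ⟨Set.toFinite _⟩, KinserFive.mem_witness, ?_⟩
  rw [KinserFive.dual_eq]
  exact KinserFive.not_mem_dual
end
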